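/- arXiv:2405.12013 — 13 statements merged into one kernel-verified Lean document; each statement's English description precedes it below -/
import Mathlib

section
/- Let n > c₁ ≥ c₂ and n·c₁ ≥ Σ ≥ n·c₂ be natural numbers and let D = (d₁,…,dₙ) ∈ 𝒟(n,Σ,c₁,c₂). Then the inequality EG_k holds for D for every k with 1 ≤ k ≤ c₂ and for every k with c₁ < k ≤ n. -/
/-!
Since every entry is at most `c₁`, the left-hand side of `EG_k` is at most `k * c₁`.
If `c₁ < k`, then `k * c₁ ≤ k * (k - 1)` and the remaining sum is not needed.
If `k ≤ c₂`, then each of the `n - k` terms `min (d i) k` equals `k`, so the right-hand side is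
`k * (k - 1) + (n - k) * k = k * (n - 1)`, which is at least `k * c₁` because `c₁ < n`.
-/


/-- Sum of the first `k` entries of a sequence `d` of length `n`. -/
def psum {n : ℕ} (d : Fin n → ℕ) (k : ℕ) : ℕ :=
  ∑ i : Fin n, if (i : ℕ) < k then d i else 0

/-- The Erdős–Gallai inequality `EG_k`:
`∑_{i=1}^k dᵢ ≤ k(k−1) + ∑_{i=k+1}^n min(dᵢ,k)`. -/
def EGineq {n : ℕ} (d : Fin n → ℕ) (k : ℕ) : Prop :=
  psum d k ≤ k * (k - 1) + ∑ i : Fin n, if k ≤ (i : ℕ) then min (d i) k else 0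

/-- The Erdős–Gallai property: `EG_k` holds for all `1 ≤ k ≤ n`. -/
def EGprop {n : ℕ} (d : Fin n → ℕ) : Prop :=
  ∀ k, 1 ≤ k → k ≤ n → EGineq d k

/-- Membership in the region `𝒟(n,S,c₁,c₂)`: non-increasing, entries between
`c₂` and `c₁`, total sum `S`. -/
def memD {n : ℕ} (S c₁ c₂ : ℕ) (d : Fin n → ℕ) : Prop :=
  Antitone d ∧ (∀ i, c₂ ≤ d i ∧ d i ≤ c₁) ∧ ∑ i, d i = S

theorem sum_ite_lt_const (n k c : ℕ) (hk : k ≤ n) :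
    (∑ i : Fin n, if (i : ℕ) < k then c else 0) = k * c := by
  rw [Fin.sum_univ_eq_sum_range (fun i => if i < k then c else 0) n, ← Finset.sum_filter]
  have h : (Finset.range n).filter (fun i => i < k) = Finset.range k := by
    ext i
    simp only [Finset.mem_filter, Finset.mem_range]
    omega
  rw [h, Finset.sum_const, Finset.card_range, smul_eq_mul]

theorem sum_ite_ge_const (n k c : ℕ) (hk : k ≤ n) :
    (∑ i : Fin n, if k ≤ (i : ℕ) then c else 0) = (n - k) * c := by
  have h : (∑ i : Fin n, if (i : ℕ) < k then c else 0)
      + (∑ i : Fin n, if k ≤ (i : ℕ) then c else 0) = n * c := by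
    rw [← Finset.sum_add_distrib]
    have h' : ∀ i : Fin n, ((if (i : ℕ) < k then c else 0)
        + if k ≤ (i : ℕ) then c else 0) = c := by
      intro i
      split_ifs <;> omega
    simp [h']
  rw [sum_ite_lt_const n k c hk] at h
  rw [Nat.sub_mul]
  omega

/-- For every `D ∈ 𝒟(n,S,c₁,c₂)` the inequality `EG_k` holds for
every `k` with `1 ≤ k ≤ c₂` and for every `k` with `c₁ < k ≤ n`. -/
theorem stmt0 (n S c₁ c₂ : ℕ) (h1 : c₁ < n) (h2 : c₂ ≤ c₁)
    (h3 : S ≤ n * c₁) (h4 : n * c₂ ≤ S) (hS : Even S)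
    (d : Fin n → ℕ) (hd : memD S c₁ c₂ d)
    (k : ℕ) (hk1 : 1 ≤ k) (hk2 : k ≤ n) (hk : k ≤ c₂ ∨ c₁ < k) :
    EGineq d k := by
  obtain ⟨-, hb, -⟩ := hd
  have hp : psum d k ≤ k * c₁ := by
    rw [← sum_ite_lt_const n k c₁ hk2]
    refine Finset.sum_le_sum fun i _ => ?_
    have := (hb i).2
    split_ifs <;> omega
  unfold EGineq
  rcases hk with hk | hk
  · have hmin : ∀ i, min (d i) k = k := fun i => min_eq_right (hk.trans (hb i).1)
    simp only [hmin]
    rw [sum_ite_ge_const n k k hk2, mul_comm (n - k) k, ← mul_add]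
    exact hp.trans (Nat.mul_le_mul_left k (by omega))
  · exact (hp.trans (Nat.mul_le_mul_left k (by omega))).trans (Nat.le_add_right _ _)
end

section
/- Let n > c₁ > c₂ and n·c₁ > Σ ≥ n·c₂ be natural numbers with Σ even, and set α = ⌊(Σ − n·c₂)/(c₁ − c₂)⌋ and a = Σ − (α·c₁ + (n−1−α)·c₂). Then 0 ≤ α ≤ n−1 and c₂ ≤ a ≤ c₁; consequently the sequence LEG(n,Σ,c₁,c₂), consisting of α copies of c₁, followed by a, followed by n−1−α copies of c₂, is a primitive element of 𝒟(n,Σ,c₁,c₂). -/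
/-- The least Erdős–Gallai sequence `LEG(n,S,c₁,c₂)`: `α` copies of `c₁`, then
the single value `a`, then `n−1−α` copies of `c₂`, where
`α = ⌊(S − n·c₂)/(c₁ − c₂)⌋` and `a = S − (α·c₁ + (n−1−α)·c₂)`. -/
def LEG (n S c₁ c₂ : ℕ) : Fin n → ℕ := fun i =>
  if (i : ℕ) < (S - n * c₂) / (c₁ - c₂) then c₁
  else if (i : ℕ) = (S - n * c₂) / (c₁ - c₂) then
    S - ((S - n * c₂) / (c₁ - c₂) * c₁ + (n - 1 - (S - n * c₂) / (c₁ - c₂)) * c₂)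
  else c₂

/-- A sequence is primitive if it has the form
`(c₁,…,c₁ (k copies), a, c₂,…,c₂ (n−1−k copies))` with `0 ≤ k ≤ n−1`, `c₂ ≤ a ≤ c₁`. -/
def Primitive {n : ℕ} (c₁ c₂ : ℕ) (d : Fin n → ℕ) : Prop :=
  ∃ k a : ℕ, k ≤ n - 1 ∧ c₂ ≤ a ∧ a ≤ c₁ ∧
    ∀ i : Fin n, d i = if (i : ℕ) < k then c₁ else if (i : ℕ) = k then a else c₂

theorem sum_primitive (k b c₁ c₂ a : ℕ) :
    ∑ i : Fin (k + 1 + b), (if (i : ℕ) < k then c₁ else if (i : ℕ) = k then a else c₂) =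
      k * c₁ + a + b * c₂ := by
  rw [Fin.sum_univ_eq_sum_range (fun i => if i < k then c₁ else if i = k then a else c₂),
    Finset.sum_range_add, Finset.sum_range_succ]
  have hlow : ∑ i ∈ Finset.range k, (if i < k then c₁ else if i = k then a else c₂) = k * c₁ := by
    rw [Finset.sum_congr rfl (g := fun _ => c₁) fun i hi => if_pos (Finset.mem_range.mp hi)]
    simp
  have hhigh : ∑ i ∈ Finset.range b,
      (if k + 1 + i < k then c₁ else if k + 1 + i = k then a else c₂) = b * c₂ := by
    rw [Finset.sum_congr rfl (g := fun _ => c₂) fun i _ => by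
      rw [if_neg (by omega), if_neg (by omega)]]
    simp
  rw [hlow, hhigh]
  simp

/-- Division with remainder of the excess `S - n * c₂` by `c₁ - c₂`, with quotient `α`:
`b = n - 1 - α` counts the trailing copies of `c₂`, and `t` is the remainder. -/
theorem exists_decomposition (n S c₁ c₂ : ℕ) (h2 : c₂ < c₁) (h3 : S < n * c₁) (h4 : n * c₂ ≤ S) :
    ∃ b t : ℕ, n = (S - n * c₂) / (c₁ - c₂) + 1 + b ∧ c₂ + t ≤ c₁ ∧
      S = (S - n * c₂) / (c₁ - c₂) * c₁ + (c₂ + t) + b * c₂ := by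
  obtain ⟨d, rfl⟩ := Nat.exists_eq_add_of_lt h2
  obtain ⟨r, rfl⟩ := Nat.exists_eq_add_of_le h4
  have hd : c₂ + d + 1 - c₂ = d + 1 := by omega
  rw [Nat.add_sub_cancel_left, hd]
  have hα : r / (d + 1) < n := by
    rw [Nat.div_lt_iff_lt_mul d.succ_pos]
    linarith
  obtain ⟨b, hb⟩ := Nat.exists_eq_add_of_le (Nat.succ_le_of_lt hα)
  have hr := Nat.div_add_mod r (d + 1)
  have ht : r % (d + 1) < d + 1 := Nat.mod_lt r d.succ_pos
  refine ⟨b, r % (d + 1), hb, by omega, ?_⟩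
  generalize r / (d + 1) = α at *
  subst hb
  conv_lhs => rw [← hr, Nat.succ_eq_add_one]
  ring

/-- with `α = ⌊(S − n·c₂)/(c₁ − c₂)⌋` and
`a = S − (α·c₁ + (n−1−α)·c₂)` we have `0 ≤ α ≤ n−1` and `c₂ ≤ a ≤ c₁`;
consequently `LEG(n,S,c₁,c₂)` is a primitive element of `𝒟(n,S,c₁,c₂)`. -/
theorem stmt1 (n S c₁ c₂ : ℕ) (h1 : c₁ < n) (h2 : c₂ < c₁)
    (h3 : S < n * c₁) (h4 : n * c₂ ≤ S) (hS : Even S) :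
    (S - n * c₂) / (c₁ - c₂) ≤ n - 1 ∧
    c₂ ≤ S - ((S - n * c₂) / (c₁ - c₂) * c₁ +
      (n - 1 - (S - n * c₂) / (c₁ - c₂)) * c₂) ∧
    S - ((S - n * c₂) / (c₁ - c₂) * c₁ +
      (n - 1 - (S - n * c₂) / (c₁ - c₂)) * c₂) ≤ c₁ ∧
    memD S c₁ c₂ (LEG n S c₁ c₂) ∧ Primitive c₁ c₂ (LEG n S c₁ c₂) := by
  obtain ⟨b, t, hn, hc, hsum⟩ := exists_decomposition n S c₁ c₂ h2 h3 h4
  have hP : ∀ i, LEG n S c₁ c₂ i = if (i : ℕ) < (S - n * c₂) / (c₁ - c₂) then c₁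
      else if (i : ℕ) = (S - n * c₂) / (c₁ - c₂) then
        S - ((S - n * c₂) / (c₁ - c₂) * c₁ + (n - 1 - (S - n * c₂) / (c₁ - c₂)) * c₂)
      else c₂ := fun _ => rfl
  generalize (S - n * c₂) / (c₁ - c₂) = α at *
  have hb : n - 1 - α = b := by omega
  -- The truncated subtraction defining the middle entry is exact.
  have ha : S - (α * c₁ + (n - 1 - α) * c₂) = c₂ + t := by
    rw [hb]
    omega
  simp only [ha] at hP ⊢
  refine ⟨by omega, by omega, hc, ⟨?_, ?_, ?_⟩, α, c₂ + t, by omega, by omega, hc, hP⟩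
  · intro i j hij
    have hij' : (i : ℕ) ≤ j := hij
    rw [hP, hP]
    split_ifs <;> omega
  · intro i
    rw [hP]
    split_ifs <;> omega
  · rw [Finset.sum_congr rfl fun i _ => hP i]
    clear hP
    subst hn
    rw [sum_primitive, ← hsum]
end

section
/- Let n > c₁ > c₂ and n·c₁ > Σ ≥ n·c₂ be natural numbers with Σ even. If the sequence LEG(n,Σ,c₁,c₂) has the Erdős–Gallai property, then every element of 𝒟(n,Σ,c₁,c₂) has the Erdős–Gallai property. -/
/-- The sum of the entries of `d` at the (zero-based) positions `i ≥ m`. -/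
def tailSum {n : ℕ} (d : Fin n → ℕ) (m : ℕ) : ℕ :=
  ∑ i : Fin n, if m ≤ (i : ℕ) then d i else 0

lemma psum_add_tailSum {n : ℕ} (d : Fin n → ℕ) (m : ℕ) :
    psum d m + tailSum d m = ∑ i, d i := by
  unfold psum tailSum
  rw [← Finset.sum_add_distrib]
  refine Finset.sum_congr rfl fun i _ => ?_
  split_ifs <;> omega

lemma sum_two_step (α r a c₁ c₂ : ℕ) :
    ∑ i ∈ Finset.range (α + 1 + r), (if i < α then c₁ else if i = α then a else c₂)
      = α * c₁ + a + r * c₂ := by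
  induction r with
  | zero =>
    have h : ∑ i ∈ Finset.range α, (if i < α then c₁ else if i = α then a else c₂) = α * c₁ := by
      rw [Finset.sum_congr rfl (g := fun _ => c₁)
        (fun i hi => if_pos (Finset.mem_range.mp hi))]
      simp
    rw [add_zero, Finset.sum_range_succ, h]
    simp
  | succ r ih =>
    rw [← add_assoc, Finset.sum_range_succ, ih, if_neg (by omega), if_neg (by omega)]
    ring

/-- The hypotheses on `S` give `α < n` and make the subtraction defining the middle entry exact,
so the total of `LEG` is indeed `S`. -/
lemma sum_LEG {n S c₁ c₂ : ℕ} (h2 : c₂ < c₁) (h3 : S < n * c₁) (h4 : n * c₂ ≤ S) :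
    ∑ i, LEG n S c₁ c₂ i = S := by
  obtain ⟨e, rfl⟩ := Nat.exists_eq_add_of_lt h2
  unfold LEG
  have he : c₂ + e + 1 - c₂ = e + 1 := by omega
  rw [he]
  have hlt : (S - n * c₂) / (e + 1) < n := by
    rw [Nat.div_lt_iff_lt_mul (by omega)]
    have : n * (c₂ + e + 1) = n * c₂ + n * (e + 1) := by ring
    omega
  have hle : (S - n * c₂) / (e + 1) * (e + 1) ≤ S - n * c₂ := Nat.div_mul_le_self _ _
  generalize (S - n * c₂) / (e + 1) = α at hlt hle ⊢
  obtain ⟨r, rfl⟩ : ∃ r, n = α + 1 + r := ⟨n - (α + 1), by omega⟩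
  have hr : α + 1 + r - 1 - α = r := by omega
  rw [hr, Fin.sum_univ_eq_sum_range (fun i => if i < α then c₂ + e + 1 else if i = α then
    S - (α * (c₂ + e + 1) + r * c₂) else c₂), sum_two_step]
  have e1 : (α + 1 + r) * c₂ = α * c₂ + c₂ + r * c₂ := by ring
  have e2 : α * (c₂ + e + 1) = α * c₂ + α * (e + 1) := by ring
  omega

section Majorization

variable {n S c₁ c₂ : ℕ} {d : Fin n → ℕ}

/-- `LEG` majorizes `d`: up to position `α` compare prefixes entrywise, beyond it compare tails
entrywise and use that both totals equal `S`. -/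
lemma psum_le_LEG (h2 : c₂ < c₁) (h3 : S < n * c₁) (h4 : n * c₂ ≤ S)
    (hd : memD S c₁ c₂ d) (m : ℕ) : psum d m ≤ psum (LEG n S c₁ c₂) m := by
  obtain ⟨-, hb, hsum⟩ := hd
  rcases le_or_gt m ((S - n * c₂) / (c₁ - c₂)) with hm | hm
  · refine Finset.sum_le_sum fun i _ => ?_
    split_ifs with hi
    · rw [LEG, if_pos (by omega)]
      exact (hb i).2
    · exact le_rfl
  · have ht : tailSum (LEG n S c₁ c₂) m ≤ tailSum d m := by
      refine Finset.sum_le_sum fun i _ => ?_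
      split_ifs with hi
      · rw [LEG, if_neg (by omega), if_neg (by omega)]
        exact (hb i).1
      · exact le_rfl
    have hdm := psum_add_tailSum d m
    have hLm := psum_add_tailSum (LEG n S c₁ c₂) m
    rw [sum_LEG h2 h3 h4] at hLm
    omega

lemma tail_LEG_le (h2 : c₂ < c₁) (h3 : S < n * c₁) (h4 : n * c₂ ≤ S)
    (hd : memD S c₁ c₂ d) (m : ℕ) : tailSum (LEG n S c₁ c₂) m ≤ tailSum d m := by
  have hp := psum_le_LEG h2 h3 h4 hd m
  have hdm := psum_add_tailSum d m
  have hLm := psum_add_tailSum (LEG n S c₁ c₂) m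
  rw [sum_LEG h2 h3 h4] at hLm
  rw [hd.2.2] at hdm
  omega

end Majorization

/-- For a non-increasing sequence some `m ≥ k` separates, among the positions from `k` on,
the entries that are at least `k` from those that are at most `k`. -/
lemma exists_cut {n : ℕ} {d : Fin n → ℕ} (hd : Antitone d) {k : ℕ} (hk : k ≤ n) :
    ∃ m, k ≤ m ∧ (∀ i : Fin n, m ≤ i → d i ≤ k) ∧ ∀ i : Fin n, k ≤ i → i < m → k ≤ d i := by
  classical
  have hex : ∃ m, k ≤ m ∧ ∀ i : Fin n, m ≤ i → d i ≤ k :=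
    ⟨n, hk, fun i hi => absurd i.isLt (by omega)⟩
  refine ⟨Nat.find hex, (Nat.find_spec hex).1, (Nat.find_spec hex).2, fun i hki him => ?_⟩
  have hmin := Nat.find_min hex him
  push Not at hmin
  obtain ⟨j, hij, hj⟩ := hmin hki
  exact hj.le.trans (hd (Fin.le_def.mpr hij))

/-- if `LEG(n,S,c₁,c₂)` has the Erdős–Gallai property, then every
element of `𝒟(n,S,c₁,c₂)` has the Erdős–Gallai property. -/
theorem stmt2 (n S c₁ c₂ : ℕ) (h1 : c₁ < n) (h2 : c₂ < c₁)
    (h3 : S < n * c₁) (h4 : n * c₂ ≤ S) (hS : Even S)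
    (hLEG : EGprop (LEG n S c₁ c₂))
    (d : Fin n → ℕ) (hd : memD S c₁ c₂ d) :
    EGprop d := by
  intro k hk1 hkn
  obtain ⟨m, hkm, hlow, hhigh⟩ := exists_cut hd.1 hkn
  have hL := hLEG k hk1 hkn
  have hp := psum_le_LEG h2 h3 h4 hd k
  have ht := tail_LEG_le h2 h3 h4 hd m
  unfold EGineq at hL ⊢
  -- The block `k ≤ i < m` contributes the same amount, `k (m - k)` for `m ≤ n`, on both sides,
  -- so its value need not be computed.
  have hLm : (∑ i : Fin n, if k ≤ (i : ℕ) then min (LEG n S c₁ c₂ i) k else 0) ≤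
      (∑ i : Fin n, if k ≤ (i : ℕ) ∧ (i : ℕ) < m then k else 0)
        + tailSum (LEG n S c₁ c₂) m := by
    unfold tailSum
    rw [← Finset.sum_add_distrib]
    refine Finset.sum_le_sum fun i _ => ?_
    split_ifs <;> omega
  have hdm : (∑ i : Fin n, if k ≤ (i : ℕ) ∧ (i : ℕ) < m then k else 0) + tailSum d m ≤
      ∑ i : Fin n, if k ≤ (i : ℕ) then min (d i) k else 0 := by
    unfold tailSum
    rw [← Finset.sum_add_distrib]
    refine Finset.sum_le_sum fun i _ => ?_
    have hi1 := hlow i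
    have hi2 := hhigh i
    split_ifs <;> omega
  omega
end

section
/- Let D = (d₁,…,dₙ) ∈ 𝒟(n,Σ,c₁,c₂) and let 1 ≤ ℓ < m ≤ n with d_ℓ < c₁ and d_m > c₂. Let D' be obtained from D by increasing the ℓ-th coordinate by 1 and decreasing the m-th coordinate by 1, and assume D' is non-increasing. Then D' ∈ 𝒟(n,Σ,c₁,c₂), D precedes D' strictly in the lexicographic order, and if D' has the Erdős–Gallai property then D also has the Erdős–Gallai property. -/
/-- Strict lexicographic order: `d <ₗ e` iff `d j < e j` at the least index `j`
where they differ. -/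
def lexLt {n : ℕ} (d e : Fin n → ℕ) : Prop :=
  ∃ j : Fin n, d j < e j ∧ ∀ i : Fin n, i < j → d i = e i

/-- Two sums whose terms agree off `{a, b}` differ only by the terms at `a` and `b`, in a form
free of subtraction. -/
theorem sum_add_pair {n : ℕ} (f g : Fin n → ℕ) (a b : Fin n) (hab : a ≠ b)
    (h : ∀ i, i ≠ a → i ≠ b → f i = g i) :
    ∑ i, f i + (g a + g b) = ∑ i, g i + (f a + f b) := by
  have hb : b ∈ Finset.univ.erase a := by simp [hab.symm]
  rw [← Finset.add_sum_erase _ f (Finset.mem_univ a), ← Finset.add_sum_erase _ f hb,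
    ← Finset.add_sum_erase _ g (Finset.mem_univ a), ← Finset.add_sum_erase _ g hb]
  have hrest : ∑ i ∈ (Finset.univ.erase a).erase b, f i =
      ∑ i ∈ (Finset.univ.erase a).erase b, g i := by
    refine Finset.sum_congr rfl fun i hi => ?_
    simp only [Finset.mem_erase] at hi
    exact h i hi.2.1 hi.1
  omega

/-- the perturbation lemma. If `D ∈ 𝒟(n,S,c₁,c₂)`, `ℓ < m`,
`d_ℓ < c₁`, `d_m > c₂`, and `D' = D + 1^{+ℓ}_{−m}` is non-increasing, then
`D' ∈ 𝒟(n,S,c₁,c₂)`, `D <ₗ D'` lexicographically, and if `D'` is Erdős–Gallai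
then so is `D`. -/
theorem stmt3 (n S c₁ c₂ : ℕ) (h1 : c₁ < n) (h2 : c₂ ≤ c₁)
    (h3 : S ≤ n * c₁) (h4 : n * c₂ ≤ S) (hS : Even S)
    (d : Fin n → ℕ) (hd : memD S c₁ c₂ d)
    (ℓ m : Fin n) (hlm : ℓ < m) (hdl : d ℓ < c₁) (hdm : c₂ < d m)
    (d' : Fin n → ℕ)
    (hd' : ∀ i, d' i = if i = ℓ then d i + 1 else if i = m then d i - 1 else d i)
    (hanti : Antitone d') :
    memD S c₁ c₂ d' ∧ lexLt d d' ∧ (EGprop d' → EGprop d) := by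
  obtain ⟨hda, hbd, hsum⟩ := hd
  have hne : ℓ ≠ m := hlm.ne
  have hl : d' ℓ = d ℓ + 1 := by simp [hd']
  have hm : d' m = d m - 1 := by simp [hd', hne.symm]
  have hoff : ∀ i, i ≠ ℓ → i ≠ m → d' i = d i := fun i h h' => by simp [hd', h, h']
  have hml : d m ≤ d ℓ := hda hlm.le
  have hlm' : (ℓ : ℕ) < m := hlm
  refine ⟨⟨hanti, fun i => ?_, ?_⟩, ⟨ℓ, by omega, fun i hi => ?_⟩, fun hEG k hk hkn => ?_⟩
  · have := hbd i
    rcases eq_or_ne i ℓ with rfl | h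
    · omega
    · rcases eq_or_ne i m with rfl | h'
      · omega
      · rw [hoff i h h']; exact this
  · have := sum_add_pair d' d ℓ m hne hoff
    omega
  · exact (hoff i hi.ne (hi.trans hlm).ne).symm
  · have hEGk := hEG k hk hkn
    unfold EGineq psum at hEGk ⊢
    have hhead := sum_add_pair (fun i => if (i : ℕ) < k then d' i else 0)
      (fun i => if (i : ℕ) < k then d i else 0) ℓ m hne
      (fun i h h' => by simp only [hoff i h h'])
    have htail := sum_add_pair (fun i => if k ≤ (i : ℕ) then min (d' i) k else 0)
      (fun i => if k ≤ (i : ℕ) then min (d i) k else 0) ℓ m hne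
      (fun i h h' => by simp only [hoff i h h'])
    simp only [hl, hm] at hhead htail
    -- `omega` must see the quadratic term as an atom.
    generalize k * (k - 1) = q at hEGk ⊢
    split_ifs at hhead htail <;> omega
end

section
/- Let n > c₁ ≥ c₂ and n·c₁ ≥ Σ ≥ n·c₂ be natural numbers with Σ even. Then any two primitive elements of 𝒟(n,Σ,c₁,c₂) are equal, and if P is a primitive element of 𝒟(n,Σ,c₁,c₂) then every D ∈ 𝒟(n,Σ,c₁,c₂) satisfies D ≤ P in the lexicographic order. -/
/-- At the first index `j` where `D` and `P` differ, `P j < D j` would force `P j < c₁`, so `j` lies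
at or beyond the pivot of `P` and `P` equals its lower bound `c₂` after `j`; then `P ≤ D` pointwise
and strictly at `j`, against the equality of the sums. -/
theorem eq_or_lexLt_of_primitive {n S c₁ c₂ : ℕ} {P D : Fin n → ℕ} (hP : memD S c₁ c₂ P)
    (hprim : Primitive c₁ c₂ P) (hD : memD S c₁ c₂ D) : D = P ∨ lexLt D P := by
  obtain ⟨k, a, -, -, -, hf⟩ := hprim
  by_cases heq : D = P
  · exact Or.inl heq
  refine Or.inr ?_
  have hex : ∃ j, D j ≠ P j := Function.ne_iff.mp heq
  obtain ⟨j, hj, hmin⟩ := WellFounded.has_min (wellFounded_lt (α := Fin n)) {j | D j ≠ P j} hex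
  have hpre : ∀ i, i < j → D i = P i := fun i hi => by
    by_contra hne
    exact hmin i hne hi
  refine ⟨j, ?_, hpre⟩
  by_contra hlt
  have hgt : P j < D j := lt_of_le_of_ne (not_lt.mp hlt) (Ne.symm hj)
  have hkj : k ≤ (j : ℕ) := by
    by_contra hjk
    have h1 := hf j
    rw [if_pos (not_le.mp hjk)] at h1
    have h2 := (hD.2.1 j).2
    omega
  have hle : ∀ i, P i ≤ D i := fun i => by
    rcases lt_trichotomy i j with h | h | h
    · exact (hpre i h).ge
    · exact h ▸ hgt.le
    · have hji : (j : ℕ) < i := h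
      rw [hf i, if_neg (by omega), if_neg (by omega)]
      exact (hD.2.1 i).1
  have hsum : ∑ i, P i < ∑ i, D i :=
    Finset.sum_lt_sum (fun i _ => hle i) ⟨j, Finset.mem_univ j, hgt⟩
  rw [hP.2.2, hD.2.2] at hsum
  exact lt_irrefl S hsum

theorem lexLt_asymm {n : ℕ} {d e : Fin n → ℕ} (h : lexLt d e) : ¬ lexLt e d := by
  obtain ⟨i, hi, hi'⟩ := h
  rintro ⟨j, hj, hj'⟩
  rcases lt_trichotomy i j with h | h | h
  · exact hi.ne (hj' i h).symm
  · subst h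
    exact hi.asymm hj
  · exact hj.ne (hi' j h).symm

/-- any two primitive elements of `𝒟(n,S,c₁,c₂)` coincide, and a
primitive element is the lexicographic maximum of `𝒟(n,S,c₁,c₂)`. -/
theorem stmt4 (n S c₁ c₂ : ℕ) (h1 : c₁ < n) (h2 : c₂ ≤ c₁)
    (h3 : S ≤ n * c₁) (h4 : n * c₂ ≤ S) (hS : Even S) :
    (∀ P Q : Fin n → ℕ, memD S c₁ c₂ P → Primitive c₁ c₂ P →
      memD S c₁ c₂ Q → Primitive c₁ c₂ Q → P = Q) ∧
    (∀ P : Fin n → ℕ, memD S c₁ c₂ P → Primitive c₁ c₂ P →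
      ∀ D : Fin n → ℕ, memD S c₁ c₂ D → D = P ∨ lexLt D P) := by
  refine ⟨fun P Q hP hPp hQ hQp => ?_, fun P hP hPp D hD => eq_or_lexLt_of_primitive hP hPp hD⟩
  rcases eq_or_lexLt_of_primitive hQ hQp hP with h | h
  · exact h
  rcases eq_or_lexLt_of_primitive hP hPp hQ with h' | h'
  · exact h'.symm
  exact absurd h' (lexLt_asymm h)
end

section
/- Let n > c₁ ≥ c₂ be natural numbers and suppose that every sequence in 𝒟(n,c₁,c₂) is graphic. Then for every k with 1 ≤ k ≤ n one has c₁·k ≤ k·(k−1) + c₂·(n−k) + 1. -/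
/-- Membership in the very simple region `𝒟(n,c₁,c₂)`: non-increasing, entries
between `c₂` and `c₁`, even sum. -/
def memDV {n : ℕ} (c₁ c₂ : ℕ) (d : Fin n → ℕ) : Prop :=
  Antitone d ∧ (∀ i, c₂ ≤ d i ∧ d i ≤ c₁) ∧ Even (∑ i, d i)

/-- The degree of the vertex `i` in a simple graph on `Fin n`. -/
noncomputable def degSeq {n : ℕ} (G : SimpleGraph (Fin n)) : Fin n → ℕ :=
  fun i => Nat.card {j : Fin n // G.Adj i j}

/-- A sequence is graphic if some simple graph on the labeled vertex set realizes it. -/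
def IsGraphic {n : ℕ} (d : Fin n → ℕ) : Prop :=
  ∃ G : SimpleGraph (Fin n), ∀ i, degSeq G i = d i

/-- `numR n e` is the number `N(e)` of simple graphs on the labeled vertex set
`v₁,…,vₙ` with degree vector `e` (an integer vector). -/
noncomputable def numR (n : ℕ) (e : Fin n → ℤ) : ℕ :=
  Nat.card {G : SimpleGraph (Fin n) // ∀ i, (degSeq G i : ℤ) = e i}

/-- The degree sum over a vertex set `A` counts ordered adjacent pairs inside `A`, at most
`|A| (|A| - 1)`, and edges leaving `A`, each of which is also counted by the degree of its endpoint
outside `A`. -/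
lemma sum_degSeq_le {n : ℕ} (G : SimpleGraph (Fin n)) (A : Finset (Fin n)) :
    ∑ i ∈ A, degSeq G i ≤ A.card * (A.card - 1) + ∑ j ∈ Aᶜ, degSeq G j := by
  classical
  have hdeg : ∀ i, degSeq G i = ∑ j, if G.Adj i j then 1 else 0 := by
    intro i
    rw [degSeq, Nat.card_eq_fintype_card, Fintype.card_subtype, Finset.card_filter]
  have hsplit : ∀ i, degSeq G i =
      (∑ j ∈ A, if G.Adj i j then 1 else 0) + ∑ j ∈ Aᶜ, if G.Adj i j then 1 else 0 := by
    intro i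
    rw [hdeg, Finset.sum_add_sum_compl]
  rw [Finset.sum_congr rfl (fun i _ => hsplit i), Finset.sum_add_distrib]
  refine Nat.add_le_add ?_ ?_
  · rw [← smul_eq_mul]
    refine Finset.sum_le_card_nsmul _ _ _ fun i hi => ?_
    rw [← Finset.card_filter, ← Finset.card_erase_of_mem hi]
    refine Finset.card_le_card fun j hj => ?_
    rw [Finset.mem_filter] at hj
    exact Finset.mem_erase.2 ⟨hj.2.ne', hj.1⟩
  · rw [Finset.sum_comm]
    refine Finset.sum_le_sum fun j _ => ?_
    rw [hsplit j]
    simp only [G.adj_comm j]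
    exact Nat.le_add_right _ _

/-- The sequence with `k` entries `c₁`, then one entry `c₂ + e`, then entries `c₂`. -/
def testSeq (n k c₁ c₂ e : ℕ) (i : Fin n) : ℕ :=
  if (i : ℕ) < k then c₁ else if (i : ℕ) = k then c₂ + e else c₂

/-- The vertices carrying the `k` large entries. -/
def headSet (n k : ℕ) : Finset (Fin n) := Finset.univ.filter fun i => (i : ℕ) < k

lemma card_headSet {n k : ℕ} (hk : k ≤ n) : (headSet n k).card = k := by
  simp [headSet, Fin.card_filter_val_lt, hk]

lemma sum_testSeq_head {n k : ℕ} (hk : k ≤ n) (c₁ c₂ e : ℕ) :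
    ∑ i ∈ headSet n k, testSeq n k c₁ c₂ e i = k * c₁ := by
  rw [Finset.sum_congr rfl (g := fun _ => c₁), Finset.sum_const, card_headSet hk, smul_eq_mul]
  intro i hi
  simp only [headSet, Finset.mem_filter] at hi
  simp [testSeq, hi.2]

lemma sum_testSeq_tail {n k : ℕ} (hk : k < n) (c₁ c₂ e : ℕ) :
    ∑ i ∈ (headSet n k)ᶜ, testSeq n k c₁ c₂ e i = (n - k) * c₂ + e := by
  rw [Finset.sum_congr rfl (g := fun i => c₂ + if i = ⟨k, hk⟩ then e else 0),
    Finset.sum_add_distrib, Finset.sum_const, Finset.card_compl, card_headSet hk.le, smul_eq_mul,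
    Fintype.card_fin, Finset.sum_ite_eq']
  · simp [headSet]
  · intro i hi
    simp only [headSet, Finset.mem_compl, Finset.mem_filter, Finset.mem_univ, true_and] at hi
    simp only [testSeq, hi, if_false, Fin.ext_iff]
    split_ifs <;> rfl

/-- if every sequence in `𝒟(n,c₁,c₂)` is graphic, then for every
`1 ≤ k ≤ n` one has `c₁·k ≤ k·(k−1) + c₂·(n−k) + 1`. -/
theorem stmt5 (n c₁ c₂ : ℕ) (h1 : c₁ < n) (h2 : c₂ ≤ c₁)
    (hfg : ∀ d : Fin n → ℕ, memDV c₁ c₂ d → IsGraphic d)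
    (k : ℕ) (hk1 : 1 ≤ k) (hk2 : k ≤ n) :
    c₁ * k ≤ k * (k - 1) + c₂ * (n - k) + 1 := by
  rcases hk2.eq_or_lt with rfl | hk
  · have : c₁ * k ≤ (k - 1) * k := Nat.mul_le_mul_right k (by omega)
    rw [mul_comm (k - 1)] at this
    omega
  rcases h2.eq_or_lt with rfl | hc
  · obtain ⟨m, rfl⟩ := Nat.exists_eq_add_of_le hk2
    obtain ⟨j, rfl⟩ := Nat.exists_eq_add_of_le hk1
    rw [Nat.add_sub_cancel_left, Nat.add_sub_cancel_left]
    rcases le_total (1 + j) m with h | h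
    · nlinarith [Nat.mul_le_mul_left c₂ h]
    · obtain ⟨t, ht⟩ := Nat.exists_eq_add_of_le h
      obtain ⟨p, rfl⟩ : ∃ p, m = p + 1 := ⟨m - 1, by omega⟩
      obtain rfl : j = p + t := by omega
      have h3 : c₂ ≤ 2 * p + t + 1 := by omega
      nlinarith [Nat.mul_le_mul_left t h3]
  · have key : ∀ e ≤ 1, Even (k * c₁ + ((n - k) * c₂ + e)) →
        c₁ * k ≤ k * (k - 1) + c₂ * (n - k) + 1 := by
      intro e he hev
      have hmem : memDV c₁ c₂ (testSeq n k c₁ c₂ e) := by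
        refine ⟨fun i j hij => ?_, fun i => ?_, ?_⟩
        · have hij' : (i : ℕ) ≤ j := hij
          simp only [testSeq]
          split_ifs <;> omega
        · simp only [testSeq]
          split_ifs <;> omega
        · rwa [← Finset.sum_add_sum_compl (headSet n k), sum_testSeq_head hk2,
            sum_testSeq_tail hk]
      obtain ⟨G, hG⟩ := hfg _ hmem
      have h := sum_degSeq_le G (headSet n k)
      simp only [hG] at h
      rw [sum_testSeq_head hk2, sum_testSeq_tail hk, card_headSet hk2] at h
      rw [mul_comm c₁, mul_comm c₂]
      omega
    rcases Nat.even_or_odd (k * c₁ + (n - k) * c₂) with h | h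
    · exact key 0 (by omega) h
    · exact key 1 le_rfl (by simpa only [add_assoc] using h.add_one)
end

section
/- Let n > c₁ ≥ c₂ be natural numbers such that (c₁ − c₂ + 1)² ≤ 4·c₂·(n − c₁ − 1). Then every sequence in 𝒟(n,c₁,c₂) has the Erdős–Gallai property. -/
lemma sum_fin_ite_lt (n k a : ℕ) (hk : k ≤ n) :
    (∑ i : Fin n, if (i : ℕ) < k then a else 0) = k * a := by
  rw [Fin.sum_univ_eq_sum_range (fun i => if i < k then a else 0) n]
  obtain ⟨m, rfl⟩ := Nat.exists_eq_add_of_le hk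
  rw [Finset.sum_range_add, Finset.sum_congr rfl (g := fun _ => a)
    (fun i hi => if_pos (Finset.mem_range.mp hi))]
  simp

lemma sum_fin_ite_ge (n k a : ℕ) (hk : k ≤ n) :
    (∑ i : Fin n, if k ≤ (i : ℕ) then a else 0) = (n - k) * a := by
  rw [Fin.sum_univ_eq_sum_range (fun i => if k ≤ i then a else 0) n]
  obtain ⟨m, rfl⟩ := Nat.exists_eq_add_of_le hk
  rw [Finset.sum_range_add, Finset.sum_congr rfl (g := fun _ => 0)
    (fun i hi => if_neg (Nat.not_le.mpr (Finset.mem_range.mp hi)))]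
  simp

/-- `EG_k` for the extremal sequence: `k` entries equal to `a` followed by `n - k` equal to `b`. -/
lemma extremal_ineq (n a b k : ℕ) (h1 : a < n) (h2 : b ≤ a)
    (h : (a - b + 1) ^ 2 ≤ 4 * b * (n - a - 1)) (hk1 : 1 ≤ k) (hkn : k ≤ n) :
    k * a ≤ k * (k - 1) + (n - k) * min b k := by
  obtain ⟨p, rfl⟩ := Nat.exists_eq_add_of_le h2
  obtain ⟨q, rfl⟩ := Nat.exists_eq_add_of_lt h1
  rw [show b + p - b = p by omega, show b + p + q + 1 - (b + p) - 1 = q by omega] at h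
  rcases le_total k b with hb | hb
  · rw [min_eq_right hb, mul_comm (_ - k) k, ← mul_add]
    exact Nat.mul_le_mul_left _ (by omega)
  · rw [min_eq_left hb]
    zify [hk1, hkn] at h ⊢
    -- Completing the square: four times the quadratic is this square minus the discriminant.
    nlinarith [sq_nonneg (2 * (k : ℤ) - (2 * b + p + 1))]

/-- if `(c₁ − c₂ + 1)² ≤ 4·c₂·(n − c₁ − 1)` then every sequence in
`𝒟(n,c₁,c₂)` has the Erdős–Gallai property. -/
theorem stmt6 (n c₁ c₂ : ℕ) (h1 : c₁ < n) (h2 : c₂ ≤ c₁)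
    (hineq : (c₁ - c₂ + 1) ^ 2 ≤ 4 * c₂ * (n - c₁ - 1))
    (d : Fin n → ℕ) (hd : memDV c₁ c₂ d) :
    EGprop d := by
  obtain ⟨-, hb, -⟩ := hd
  intro k hk1 hkn
  calc psum d k ≤ ∑ i : Fin n, (if (i : ℕ) < k then c₁ else 0) :=
        Finset.sum_le_sum fun i _ => by
          split_ifs
          · exact (hb i).2
          · exact le_rfl
    _ = k * c₁ := sum_fin_ite_lt n k c₁ hkn
    _ ≤ k * (k - 1) + (n - k) * min c₂ k := extremal_ineq n c₁ c₂ k h1 h2 hineq hk1 hkn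
    _ = k * (k - 1) + ∑ i : Fin n, (if k ≤ (i : ℕ) then min c₂ k else 0) := by
        rw [sum_fin_ite_ge n k _ hkn]
    _ ≤ _ := Nat.add_le_add_left (Finset.sum_le_sum fun i _ => by
        split_ifs
        · exact min_le_min_right k (hb i).1
        · exact le_rfl) _
end

section
/- Let n > c₁ ≥ c₂ and n·c₁ ≥ Σ ≥ n·c₂ be natural numbers with Σ even, and suppose (viewing all quantities as integers) that (Σ − n·c₂)·(n·c₁ − Σ) ≤ (c₁ − c₂)·[(Σ − n·c₂)·(n − c₁ − 1) + (n·c₁ − Σ)·c₂]. Then every sequence in 𝒟(n,Σ,c₁,c₂) has the Erdős–Gallai property. -/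
lemma sum_head_const {n k : ℕ} (hk : k ≤ n) (c : ℝ) :
    (∑ i : Fin n, if (i : ℕ) < k then c else 0) = k * c := by
  rw [← Finset.sum_filter, Finset.sum_const, Fin.card_filter_val_lt, min_eq_right hk, nsmul_eq_mul]

lemma sum_tail_const {n k : ℕ} (hk : k ≤ n) (c : ℝ) :
    (∑ i : Fin n, if k ≤ (i : ℕ) then c else 0) = (n - k) * c := by
  have h : (∑ i : Fin n, if (i : ℕ) < k then c else 0) +
      (∑ i : Fin n, if k ≤ (i : ℕ) then c else 0) = n * c := by
    rw [← Finset.sum_add_distrib, Finset.sum_congr rfl (g := fun _ => c)]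
    · simp
    · intro i _
      by_cases hi : (i : ℕ) < k
      · simp [hi, not_le.mpr hi]
      · simp [hi, not_lt.mp hi]
  rw [sum_head_const hk] at h
  linarith

/-- The function `t ↦ min t k` is concave, so on `[c₂, c₁]` it lies above its chord. -/
lemma chord_le_min {t k c₁ c₂ : ℝ} (h1 : c₂ ≤ t) (h2 : t ≤ c₁) (h3 : c₂ ≤ k) (h4 : k ≤ c₁) :
    c₂ * (c₁ - c₂) + (t - c₂) * (k - c₂) ≤ (c₁ - c₂) * min t k := by
  rcases le_total t k with h | h
  · rw [min_eq_left h]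
    nlinarith [mul_nonneg (sub_nonneg.2 h1) (sub_nonneg.2 h4)]
  · rw [min_eq_right h]
    nlinarith [mul_nonneg (sub_nonneg.2 h3) (sub_nonneg.2 h2)]

/-- The `EG_k` inequality in the range `c₂ < k ≤ c₁`, in terms of the head sum `x`, the tail sum `T`
and the truncated tail sum `M`. The value `k = c₂ + 1` is the smallest relevant one because `k` is
an integer. -/
lemma deficit_le {n p k c₁ c₂ x T M : ℝ} (hc₂ : 0 ≤ c₂) (hn : c₁ + 1 ≤ n) (hpn : p ≤ n)
    (hk2 : c₂ + 1 ≤ k) (hk1 : k ≤ c₁)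
    (hp : p * (c₁ + 1 - p) ≤ (n - p) * c₂)
    (hxT : x + T = n * c₂ + p * (c₁ - c₂)) (hx : x ≤ k * c₁) (hT : (n - k) * c₂ ≤ T)
    (hM : (n - k) * c₂ ≤ M)
    (hchord : (n - k) * c₂ * (c₁ - c₂) + (T - (n - k) * c₂) * (k - c₂) ≤ (c₁ - c₂) * M) :
    x ≤ k * (k - 1) + M := by
  rcases le_total p k with hpk | hkp
  · suffices h : p * (c₁ - c₂) - n * c₂ - k * (k - 1) + 2 * k * c₂ ≤ 0 by linarith
    rcases le_total p c₂ with hpc | hpc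
    · -- The quadratic is at most its value at `c₂ + 1`, which is at most `c₂ (c₁ + 1 - n)`.
      nlinarith [mul_nonneg (sub_nonneg.2 hpc) (by linarith : 0 ≤ c₁ - c₂),
        mul_nonneg (by linarith : 0 ≤ k - c₂ - 1) (by linarith : 0 ≤ k - c₂),
        mul_nonneg hc₂ (sub_nonneg.2 hn)]
    · -- The quadratic at `k` is at most its value at `p`, the gap being
      -- `(k - p) (k + p - 2 c₂ - 1)`.
      nlinarith [mul_nonneg (sub_nonneg.2 hpk) (by linarith : 0 ≤ k + p - 2 * c₂ - 1)]
  · have hD : 0 < c₁ - c₂ := by linarith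
    have haff : k * (c₁ + 1 - p) - (n - p) * c₂ ≤ 0 := by
      rcases le_total p (c₁ + 1) with h | h
      · nlinarith [mul_nonneg (sub_nonneg.2 hkp) (sub_nonneg.2 h)]
      · nlinarith [mul_nonneg (by linarith : 0 ≤ k) (sub_nonneg.2 h),
          mul_nonneg (sub_nonneg.2 hpn) hc₂]
    have hTx : T = n * c₂ + p * (c₁ - c₂) - x := by linarith
    subst hTx
    by_contra! hlt
    nlinarith [mul_pos hD (sub_pos.2 hlt), mul_nonneg hD.le (sub_nonneg.2 haff),
      mul_nonneg (sub_nonneg.2 hx) (by linarith : 0 ≤ c₁ - c₂ + (k - c₂))]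

/-- if (as integers)
`(S − n·c₂)·(n·c₁ − S) ≤ (c₁ − c₂)·[(S − n·c₂)·(n − c₁ − 1) + (n·c₁ − S)·c₂]`,
then every sequence in `𝒟(n,S,c₁,c₂)` has the Erdős–Gallai property. -/
theorem stmt8 (n S c₁ c₂ : ℕ) (h1 : c₁ < n) (h2 : c₂ ≤ c₁)
    (h3 : S ≤ n * c₁) (h4 : n * c₂ ≤ S) (hS : Even S)
    (hineq : ((S : ℤ) - n * c₂) * (n * c₁ - S) ≤
      ((c₁ : ℤ) - c₂) * (((S : ℤ) - n * c₂) * ((n : ℤ) - c₁ - 1) +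
        ((n : ℤ) * c₁ - S) * c₂))
    (d : Fin n → ℕ) (hd : memD S c₁ c₂ d) :
    EGprop d := by
  obtain ⟨-, hb, hsum⟩ := hd
  intro k hk1 hkn
  unfold EGineq
  set T : ℝ := ∑ i : Fin n, if k ≤ (i : ℕ) then (d i : ℝ) else 0 with hTdef
  set M : ℝ := ∑ i : Fin n, if k ≤ (i : ℕ) then min (d i : ℝ) k else 0 with hMdef
  have hb1 : ∀ i, (d i : ℝ) ≤ c₁ := fun i => by exact_mod_cast (hb i).2
  have hb2 : ∀ i, (c₂ : ℝ) ≤ d i := fun i => by exact_mod_cast (hb i).1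
  have hn' : (c₁ : ℝ) + 1 ≤ n := by exact_mod_cast h1
  have hk0 : (1 : ℝ) ≤ k := by exact_mod_cast hk1
  have hkn' : (k : ℝ) ≤ n := by exact_mod_cast hkn
  have hxR : ((psum d k : ℕ) : ℝ) = ∑ i : Fin n, if (i : ℕ) < k then (d i : ℝ) else 0 := by
    simp [psum]
  have hMR : ((∑ i : Fin n, if k ≤ (i : ℕ) then min (d i) k else 0 : ℕ) : ℝ) = M := by
    rw [hMdef]
    push_cast
    rfl
  have hx : (psum d k : ℝ) ≤ k * c₁ := by
    rw [hxR, ← sum_head_const hkn]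
    refine Finset.sum_le_sum fun i _ => ?_
    split_ifs
    exacts [hb1 i, le_rfl]
  suffices h : (psum d k : ℝ) ≤ k * (k - 1) + M by
    rw [← hMR] at h
    have hc : ((k - 1 : ℕ) : ℝ) = k - 1 := by push_cast [hk1]; ring
    rw [← hc] at h
    exact_mod_cast h
  rcases le_or_gt k c₂ with hkc2 | hkc2
  · have hM : ((n : ℝ) - k) * k ≤ M := by
      rw [hMdef, ← sum_tail_const hkn]
      refine Finset.sum_le_sum fun i _ => ?_
      have hkc : (k : ℝ) ≤ c₂ := by exact_mod_cast hkc2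
      split_ifs
      exacts [le_min (hkc.trans (hb2 i)) le_rfl, le_rfl]
    nlinarith
  have hk2 : (c₂ : ℝ) + 1 ≤ k := by exact_mod_cast hkc2
  have hM : ((n : ℝ) - k) * c₂ ≤ M := by
    rw [hMdef, ← sum_tail_const hkn]
    refine Finset.sum_le_sum fun i _ => ?_
    split_ifs
    exacts [le_min (hb2 i) (by linarith), le_rfl]
  have hc₂ : (0 : ℝ) ≤ c₂ := Nat.cast_nonneg _
  rcases lt_or_ge c₁ k with hkc1 | hkc1
  · have hkc1' : (c₁ : ℝ) + 1 ≤ k := by exact_mod_cast hkc1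
    nlinarith [mul_nonneg (sub_nonneg.2 hkn') hc₂]
  have hk1' : (k : ℝ) ≤ c₁ := by exact_mod_cast hkc1
  have hT : ((n : ℝ) - k) * c₂ ≤ T := by
    rw [hTdef, ← sum_tail_const hkn]
    refine Finset.sum_le_sum fun i _ => ?_
    split_ifs
    exacts [hb2 i, le_rfl]
  have hchord : ((n : ℝ) - k) * c₂ * (c₁ - c₂) + (T - (n - k) * c₂) * (k - c₂) ≤
      (c₁ - c₂) * M := by
    rw [hTdef, hMdef, ← sum_tail_const hkn, Finset.sum_mul, ← Finset.sum_sub_distrib,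
      Finset.sum_mul, ← Finset.sum_add_distrib, Finset.mul_sum]
    refine Finset.sum_le_sum fun i _ => ?_
    split_ifs
    · exact chord_le_min (hb2 i) (hb1 i) (by linarith) hk1'
    · simp
  have hxT : (psum d k : ℝ) + T = S := by
    rw [hxR, hTdef, ← Finset.sum_add_distrib, ← hsum, Nat.cast_sum]
    refine Finset.sum_congr rfl fun i _ => ?_
    by_cases hi : (i : ℕ) < k
    · simp [hi, not_le.mpr hi]
    · simp [hi, not_lt.mp hi]
  have hD : (0 : ℝ) < c₁ - c₂ := by linarith
  obtain ⟨p, hp⟩ : ∃ p : ℝ, (S : ℝ) = n * c₂ + p * (c₁ - c₂) :=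
    ⟨(S - n * c₂) / (c₁ - c₂), by field_simp; ring⟩
  have h3' : (S : ℝ) ≤ n * c₁ := by exact_mod_cast h3
  have hpn : p ≤ n := by
    by_contra! h
    nlinarith [mul_pos (sub_pos.2 h) hD]
  have hineq' : ((S : ℝ) - n * c₂) * (n * c₁ - S) ≤
      ((c₁ : ℝ) - c₂) * (((S : ℝ) - n * c₂) * ((n : ℝ) - c₁ - 1) +
        ((n : ℝ) * c₁ - S) * c₂) := by exact_mod_cast hineq
  -- Both sides of the hypothesis carry the factor `(c₁ - c₂) ^ 2`.
  have hpp : p * ((c₁ : ℝ) + 1 - p) ≤ (n - p) * c₂ := by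
    rw [hp] at hineq'
    have hD2 : (0 : ℝ) < (c₁ - c₂) ^ 2 := by positivity
    refine le_of_mul_le_mul_left ?_ hD2
    linarith
  exact deficit_le hc₂ hn' hpn hk2 hk1' hpp (hxT.trans hp) hx hT hM hchord
end

section
/- Let n > c₁ ≥ c₂ be natural numbers and suppose that every sequence in 𝒟(n,c₁,c₂) is graphic. Then for every D ∈ 𝒟(n,c₁,c₂), ∑_{1≤i<j≤n} N(D + 1^{−i}_{−j}) ≤ 3·n⁹·N(D). (In other words, the largest fully graphic very simple region is P-stable with polynomial 3n⁹.) -/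
open SimpleGraph Finset
open scoped symmDiff

/-! ### Switching along alternating trails -/

section Toggle

variable {n : ℕ}

open Classical in
lemma degSeq_eq_card (G : SimpleGraph (Fin n)) (x : Fin n) :
    degSeq G x = #{y | G.Adj x y} := by
  unfold degSeq
  rw [Nat.card_eq_fintype_card, Fintype.card_subtype]

open Classical in
lemma degSeq_eq_sum (G : SimpleGraph (Fin n)) (x : Fin n) :
    (degSeq G x : ℤ) = ∑ y, if G.Adj x y then 1 else 0 := by
  rw [degSeq_eq_card]; simp

lemma toggle_adj_of_ne {G : SimpleGraph (Fin n)} {u w x y : Fin n} (h : s(x, y) ≠ s(u, w)) :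
    (G ∆ edge u w).Adj x y ↔ G.Adj x y := by
  simp only [symmDiff_def, sup_adj, sdiff_adj, edge_adj]
  simp only [ne_eq, Sym2.eq_iff] at h
  tauto

lemma sum_pair_ind {u w : Fin n} (huw : u ≠ w) (x : Fin n) :
    (∑ y, if (x = u ∧ y = w) ∨ (x = w ∧ y = u) then (1 : ℤ) else 0)
      = (if x = u then 1 else 0) + (if x = w then 1 else 0) := by
  by_cases h1 : x = u
  · subst h1; simp [huw]
  · by_cases h2 : x = w
    · subst h2; simp [h1]
    · simp [h1, h2]

lemma degSeq_toggle_add {G : SimpleGraph (Fin n)} {u w : Fin n} (h : Gᶜ.Adj u w) (x : Fin n) :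
    (degSeq (G ∆ edge u w) x : ℤ)
      = degSeq G x + (if x = u then 1 else 0) + (if x = w then 1 else 0) := by
  classical
  rw [compl_adj] at h
  rw [degSeq_eq_sum, degSeq_eq_sum, add_assoc, ← sum_pair_ind h.1 x, ← Finset.sum_add_distrib]
  refine Finset.sum_congr rfl fun y _ => ?_
  have key : (G ∆ edge u w).Adj x y ↔ G.Adj x y ∨ ((x = u ∧ y = w) ∨ (x = w ∧ y = u)) := by
    simp only [symmDiff_def, sup_adj, sdiff_adj, edge_adj]
    have := h.1; have h2 := h.2; have h3 : ¬ G.Adj w u := fun h' => h.2 h'.symm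
    grind
  have h2 : (x = u ∧ y = w) ∨ (x = w ∧ y = u) → ¬ G.Adj x y := by
    rintro (⟨rfl, rfl⟩ | ⟨rfl, rfl⟩)
    · exact h.2
    · exact fun h' => h.2 h'.symm
  simp only [key]
  split_ifs <;> first | rfl | tauto

lemma degSeq_toggle_del {G : SimpleGraph (Fin n)} {u w : Fin n} (h : G.Adj u w) (x : Fin n) :
    (degSeq (G ∆ edge u w) x : ℤ)
      = degSeq G x - (if x = u then 1 else 0) - (if x = w then 1 else 0) := by
  have h' : (G ∆ edge u w)ᶜ.Adj u w := by
    simp [compl_adj, symmDiff_def, edge_adj, h, h.ne]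
  have := degSeq_toggle_add h' x
  rw [symmDiff_symmDiff_cancel_right] at this
  linarith

/-- The symmetric difference of the edges of the walk `i, v₀, …, v₅, j`. Repeated consecutive
vertices contribute nothing, so that shorter walks are encoded by padding with `j`. -/
def walkGraph (i j : Fin n) (v : Fin 6 → Fin n) : SimpleGraph (Fin n) :=
  edge i (v 0) ∆ (edge (v 0) (v 1) ∆ (edge (v 1) (v 2) ∆ (edge (v 2) (v 3) ∆
    (edge (v 3) (v 4) ∆ (edge (v 4) (v 5) ∆ edge (v 5) j)))))

/-- `G` can be turned into a graph whose degrees at `i` and `j` are one larger, by switching along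
a walk from `i` to `j` of length at most `7`. -/
def Augmentable (G : SimpleGraph (Fin n)) (i j : Fin n) : Prop :=
  ∃ v : Fin 6 → Fin n, ∀ x, (degSeq (G ∆ walkGraph i j v) x : ℤ)
    = degSeq G x + (if x = i then 1 else 0) + (if x = j then 1 else 0)

lemma toggle_compl_adj_of_ne {G : SimpleGraph (Fin n)} {u w x y : Fin n}
    (h : s(x, y) ≠ s(u, w)) : (G ∆ edge u w)ᶜ.Adj x y ↔ Gᶜ.Adj x y := by
  simp only [compl_adj, toggle_adj_of_ne h]

/-- An edge and a non-edge are distinct pairs. -/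
lemma pair_ne {G : SimpleGraph (Fin n)} {u w x y : Fin n} (h : G.Adj u w) (h' : Gᶜ.Adj x y) :
    s(u, w) ≠ s(x, y) := by
  rw [compl_adj] at h'
  intro e
  rw [← mem_edgeSet, e, mem_edgeSet] at h
  exact h'.2 h

lemma augmentable_one {G : SimpleGraph (Fin n)} {i j : Fin n} (h : Gᶜ.Adj i j) :
    Augmentable G i j := by
  refine ⟨fun _ => j, fun x => ?_⟩
  simp only [walkGraph, edge_self_eq_bot, symmDiff_bot]
  exact degSeq_toggle_add h x

/-- Switching a non-edge `u a` and an edge `a c` moves one unit of degree from `c` to `u`. -/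
lemma degSeq_move {G : SimpleGraph (Fin n)} {u a c : Fin n} (h1 : Gᶜ.Adj u a)
    (h2 : G.Adj a c) (x : Fin n) :
    (degSeq (G ∆ edge u a ∆ edge a c) x : ℤ)
      = degSeq G x + (if x = u then 1 else 0) - (if x = c then 1 else 0) := by
  rw [degSeq_toggle_del ((toggle_adj_of_ne (pair_ne h2 h1)).2 h2), degSeq_toggle_add h1]
  ring

/-- A move does not affect an edge different from the one it uses. -/
lemma move_adj {G : SimpleGraph (Fin n)} {u a c x y : Fin n} (h1 : Gᶜ.Adj u a)
    (h : G.Adj x y) (hne : s(x, y) ≠ s(a, c)) :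
    (G ∆ edge u a ∆ edge a c).Adj x y := by
  rw [toggle_adj_of_ne hne, toggle_adj_of_ne (pair_ne h h1)]
  exact h

/-- A move does not affect a non-edge different from the one it uses. -/
lemma move_compl_adj {G : SimpleGraph (Fin n)} {u a c x y : Fin n} (h2 : G.Adj a c)
    (h : Gᶜ.Adj x y) (hne : s(x, y) ≠ s(u, a)) :
    (G ∆ edge u a ∆ edge a c)ᶜ.Adj x y := by
  rw [toggle_compl_adj_of_ne (pair_ne h2 h).symm, toggle_compl_adj_of_ne hne]
  exact h

lemma augmentable_three {G : SimpleGraph (Fin n)} {i a b j : Fin n} (h1 : Gᶜ.Adj i a)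
    (h2 : G.Adj a b) (h3 : Gᶜ.Adj b j) (n13 : s(b, j) ≠ s(i, a)) :
    Augmentable G i j := by
  refine ⟨![a, b, j, j, j, j], fun x => ?_⟩
  have e : G ∆ walkGraph i j ![a, b, j, j, j, j] = G ∆ edge i a ∆ edge a b ∆ edge b j := by
    simp [walkGraph, symmDiff_assoc]
  rw [e, degSeq_toggle_add (move_compl_adj h2 h3 n13), degSeq_move h1 h2]
  ring

lemma augmentable_five {G : SimpleGraph (Fin n)} {i a c c' b j : Fin n} (h1 : Gᶜ.Adj i a)
    (h2 : G.Adj a c) (h3 : Gᶜ.Adj c c') (h4 : G.Adj c' b) (h5 : Gᶜ.Adj b j)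
    (n13 : s(c, c') ≠ s(i, a)) (n15 : s(b, j) ≠ s(i, a)) (n35 : s(b, j) ≠ s(c, c'))
    (n24 : s(c', b) ≠ s(a, c)) :
    Augmentable G i j := by
  refine ⟨![a, c, c', b, j, j], fun x => ?_⟩
  have e : G ∆ walkGraph i j ![a, c, c', b, j, j]
      = G ∆ edge i a ∆ edge a c ∆ edge c c' ∆ edge c' b ∆ edge b j := by
    simp [walkGraph, symmDiff_assoc]
  have m3 := move_compl_adj h2 h3 n13
  have m4 := move_adj h1 h4 n24
  have m5 := move_compl_adj h2 h5 n15
  rw [e, degSeq_toggle_add (move_compl_adj m4 m5 n35), degSeq_move m3 m4, degSeq_move h1 h2]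
  ring

lemma augmentable_seven {G : SimpleGraph (Fin n)} {i a c e e' c' b j : Fin n}
    (h1 : Gᶜ.Adj i a) (h2 : G.Adj a c) (h3 : Gᶜ.Adj c e) (h4 : G.Adj e e')
    (h5 : Gᶜ.Adj e' c') (h6 : G.Adj c' b) (h7 : Gᶜ.Adj b j)
    (n13 : s(c, e) ≠ s(i, a)) (n15 : s(e', c') ≠ s(i, a)) (n17 : s(b, j) ≠ s(i, a))
    (n35 : s(e', c') ≠ s(c, e)) (n37 : s(b, j) ≠ s(c, e)) (n57 : s(b, j) ≠ s(e', c'))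
    (n24 : s(e, e') ≠ s(a, c)) (n26 : s(c', b) ≠ s(a, c)) (n46 : s(c', b) ≠ s(e, e')) :
    Augmentable G i j := by
  refine ⟨![a, c, e, e', c', b], fun x => ?_⟩
  have e : G ∆ walkGraph i j ![a, c, e, e', c', b]
      = G ∆ edge i a ∆ edge a c ∆ edge c e ∆ edge e e' ∆ edge e' c' ∆ edge c' b ∆ edge b j := by
    simp [walkGraph, symmDiff_assoc]
  have m3 := move_compl_adj h2 h3 n13
  have m4 := move_adj h1 h4 n24
  have m5 := move_compl_adj h2 h5 n15
  have m6 := move_adj h1 h6 n26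
  have m7 := move_compl_adj h2 h7 n17
  have k5 := move_compl_adj m4 m5 n35
  have k6 := move_adj m3 m6 n46
  have k7 := move_compl_adj m4 m7 n37
  rw [e, degSeq_toggle_add (move_compl_adj k6 k7 n57), degSeq_move k5 k6, degSeq_move m3 m4,
    degSeq_move h1 h2]
  ring

end Toggle

/-! ### Graphs without short alternating trails -/

section Stuck

variable {n : ℕ}

/-- `c` is joined to at least two non-neighbours of `i`. -/
def IsCore (G : SimpleGraph (Fin n)) (i c : Fin n) : Prop :=
  ∃ a a', a ≠ a' ∧ Gᶜ.Adj i a ∧ Gᶜ.Adj i a' ∧ G.Adj a c ∧ G.Adj a' c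

/-- The non-neighbours of `i`. -/
noncomputable def nonNbr (G : SimpleGraph (Fin n)) (i : Fin n) : Finset (Fin n) := by
  classical exact {x | Gᶜ.Adj i x}

/-- The non-neighbours of `i`, together with all non-neighbours of core vertices; these are
vertices which an alternating walk of length at most `3` starting at `i` with a non-edge reaches
through a non-edge. -/
noncomputable def oddSet (G : SimpleGraph (Fin n)) (i : Fin n) : Finset (Fin n) := by
  classical exact {x | Gᶜ.Adj i x ∨ ∃ c, IsCore G i c ∧ Gᶜ.Adj c x}

lemma mem_nonNbr {G : SimpleGraph (Fin n)} {i x : Fin n} : x ∈ nonNbr G i ↔ Gᶜ.Adj i x := by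
  simp [nonNbr]

lemma mem_oddSet {G : SimpleGraph (Fin n)} {i x : Fin n} :
    x ∈ oddSet G i ↔ Gᶜ.Adj i x ∨ ∃ c, IsCore G i c ∧ Gᶜ.Adj c x := by
  simp [oddSet]

/-- The consequences of the absence of short alternating trails from `i` to `j`. -/
structure Stuck (G : SimpleGraph (Fin n)) (i j : Fin n) : Prop where
  adj : G.Adj i j
  three : ∀ a b, Gᶜ.Adj i a → G.Adj a b → ¬ Gᶜ.Adj b j
  five : ∀ a c c' b, Gᶜ.Adj i a → G.Adj a c → Gᶜ.Adj c c' → G.Adj c' b → ¬ Gᶜ.Adj b j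
  odd : ∀ x ∈ oddSet G i, ∀ y ∈ oddSet G j, ¬ G.Adj x y

lemma Stuck.symm {G : SimpleGraph (Fin n)} {i j : Fin n} (h : Stuck G i j) : Stuck G j i where
  adj := h.adj.symm
  three a b h1 h2 h3 := h.three b a h3.symm h2.symm h1.symm
  five a c c' b h1 h2 h3 h4 h5 := h.five b c' c a h5.symm h4.symm h3.symm h2.symm h1.symm
  odd x hx y hy hxy := h.odd y hy x hx hxy.symm

lemma stuck_of_not_augmentable {G : SimpleGraph (Fin n)} {i j : Fin n} (hij : i ≠ j)
    (h : ¬ Augmentable G i j) : Stuck G i j := by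
  have adj : G.Adj i j := by
    by_contra h'
    exact h (augmentable_one ((compl_adj ..).2 ⟨hij, h'⟩))
  have three : ∀ a b, Gᶜ.Adj i a → G.Adj a b → ¬ Gᶜ.Adj b j := by
    intro a b h1 h2 h3
    refine h (augmentable_three h1 h2 h3 ?_)
    simp only [compl_adj] at h1 h3
    have := h1.2; have := h3.2
    simp only [ne_eq, Sym2.eq_iff]
    rintro (⟨rfl, rfl⟩ | ⟨rfl, rfl⟩) <;> simp_all [adj_comm]
  have five : ∀ a c c' b, Gᶜ.Adj i a → G.Adj a c → Gᶜ.Adj c c' → G.Adj c' b →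
      ¬ Gᶜ.Adj b j := by
    intro a c c' b h1 h2 h3 h4 h5
    refine h (augmentable_five h1 h2 h3 h4 h5 ?_ ?_ ?_ ?_) <;>
    simp only [compl_adj] at h1 h3 h5 <;>
    simp only [ne_eq, Sym2.eq_iff] <;>
    rintro (⟨rfl, rfl⟩ | ⟨rfl, rfl⟩) <;> simp_all [adj_comm]
  -- Trails of length seven; the two choices offered by core vertices avoid repeated pairs.
  have seven : ∀ c c' e e', IsCore G i c → IsCore G j c' → Gᶜ.Adj c e → G.Adj e e' →
      ¬ Gᶜ.Adj e' c' := by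
    intro c c' e e' hc hc' h3 h4 h5
    have key : ∃ a b, Gᶜ.Adj i a ∧ G.Adj a c ∧ G.Adj c' b ∧ Gᶜ.Adj b j ∧
        (c = c' → a ≠ b) ∧ (c' = i → e' ≠ a) ∧ (c = j → e ≠ b) := by
      obtain ⟨a, a', haa, h1, h1', h2, h2'⟩ := hc
      obtain ⟨b, b', hbb, h7, h7', h6, h6'⟩ := hc'
      have hci : c ≠ i := by rintro rfl; simp_all [adj_comm]
      have hcj : c' ≠ j := by rintro rfl; simp_all [adj_comm]
      obtain ⟨a1, k1, k2, k3⟩ : ∃ a1, Gᶜ.Adj i a1 ∧ G.Adj a1 c ∧ (c' = i → e' ≠ a1) := by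
        by_cases he : e' = a
        · exact ⟨a', h1', h2', fun _ => he ▸ haa⟩
        · exact ⟨a, h1, h2, fun _ => he⟩
      by_cases hcc : c = c'
      · subst hcc
        by_cases hb : b = a1
        · exact ⟨a1, b', k1, k2, h6'.symm, h7'.symm, fun _ => hb ▸ hbb, k3, fun h => (hcj h).elim⟩
        · exact ⟨a1, b, k1, k2, h6.symm, h7.symm, fun _ => Ne.symm hb, k3,
            fun h => (hcj h).elim⟩
      · by_cases he : e = b
        · exact ⟨a1, b', k1, k2, h6'.symm, h7'.symm, fun h => (hcc h).elim, k3,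
            fun _ => he ▸ hbb⟩
        · exact ⟨a1, b, k1, k2, h6.symm, h7.symm, fun h => (hcc h).elim, k3, fun _ => he⟩
    obtain ⟨a, b, h1, h2, h6, h7, q1, q2, q3⟩ := key
    have t := three a b h1
    refine h (augmentable_seven h1 h2 h3 h4 h5 h6 h7 ?_ ?_ ?_ ?_ ?_ ?_ ?_ ?_ ?_) <;>
    simp only [compl_adj] at h1 h3 h5 h7 t <;>
    simp only [ne_eq, Sym2.eq_iff] <;>
    rintro (⟨rfl, rfl⟩ | ⟨rfl, rfl⟩) <;> simp_all [adj_comm]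
  refine ⟨adj, three, five, ?_⟩
  intro x hx y hy hxy
  rw [mem_oddSet] at hx hy
  rcases hx with hx | ⟨c, hc, hx⟩ <;> rcases hy with hy | ⟨c', hc', hy⟩
  · exact three x y hx hxy hy.symm
  · obtain ⟨b, -, -, hb, -, hb', -⟩ := hc'
    exact five x y c' b hx hxy hy.symm hb'.symm hb.symm
  · obtain ⟨a, -, -, ha, -, ha', -⟩ := hc
    exact five a c x y ha ha' hx hxy hy.symm
  · exact seven c c' x y hc hc' hx hxy hy.symm

/-! ### Counting pairs between the odd set and its complement -/

/-- The number of vertices of `E` that are not adjacent to `y` (with `y` itself counted if it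
belongs to `E`). -/
noncomputable def nonAdjCount (G : SimpleGraph (Fin n)) (E : Finset (Fin n)) (y : Fin n) : ℕ := by
  classical exact #{x ∈ E | ¬ G.Adj x y}

lemma card_nonNbr (G : SimpleGraph (Fin n)) (y : Fin n) :
    (#(nonNbr G y) : ℤ) = n - 1 - degSeq G y := by
  classical
  have h1 : nonNbr G y = (univ.filter (fun x => ¬ G.Adj y x)).erase y := by
    ext x; simp [mem_nonNbr, compl_adj, eq_comm]
  have h2 : y ∈ univ.filter (fun x => ¬ G.Adj y x) := by simp
  have h3 := Finset.card_erase_add_one h2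
  have h4 := Finset.card_filter_add_card_filter_not (s := (univ : Finset (Fin n)))
    (fun x => G.Adj y x)
  rw [← degSeq_eq_card, card_univ, Fintype.card_fin] at h4
  rw [h1]
  omega

/-- Double counting of `E ×ˢ F` when all edges at `E` end in `F`. -/
lemma sum_deg_add_sum_nonAdjCount (G : SimpleGraph (Fin n)) (E F : Finset (Fin n))
    (h : ∀ x ∈ E, ∀ y, G.Adj x y → y ∈ F) :
    ∑ x ∈ E, (degSeq G x : ℤ) + ∑ y ∈ F, (nonAdjCount G E y : ℤ) = #E * #F := by
  classical
  have h1 : ∑ x ∈ E, (degSeq G x : ℤ) = ∑ y ∈ F, ∑ x ∈ E, if G.Adj x y then (1 : ℤ) else 0 := by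
    rw [Finset.sum_comm]
    refine Finset.sum_congr rfl fun x hx => ?_
    rw [degSeq_eq_sum]
    refine (Finset.sum_subset (subset_univ F) fun y _ hy => ?_).symm
    exact if_neg fun h' => hy (h x hx y h')
  rw [h1, ← Finset.sum_add_distrib]
  have h2 : ∀ y ∈ F, (∑ x ∈ E, if G.Adj x y then (1 : ℤ) else 0) + (nonAdjCount G E y : ℤ)
      = #E := by
    intro y _
    rw [nonAdjCount, Finset.sum_boole]
    exact_mod_cast Finset.card_filter_add_card_filter_not (s := E) (fun x => G.Adj x y)
  rw [Finset.sum_congr rfl h2]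
  simp [mul_comm]

lemma nonNbr_subset_oddSet (G : SimpleGraph (Fin n)) (i : Fin n) : nonNbr G i ⊆ oddSet G i :=
  fun _ hx => mem_oddSet.2 (Or.inl (mem_nonNbr.1 hx))

lemma card_le_nonAdjCount {G : SimpleGraph (Fin n)} {S E : Finset (Fin n)} {y : Fin n}
    (hS : S ⊆ E) (h : ∀ x ∈ S, ¬ G.Adj x y) : #S ≤ nonAdjCount G E y := by
  classical
  exact Finset.card_le_card fun x hx => Finset.mem_filter.2 ⟨hS hx, h x hx⟩

lemma nonAdjCount_core {G : SimpleGraph (Fin n)} {i y : Fin n} (hy : IsCore G i y) :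
    #(nonNbr G y) ≤ nonAdjCount G (oddSet G i) y :=
  card_le_nonAdjCount (fun _ hx => mem_oddSet.2 (Or.inr ⟨y, hy, mem_nonNbr.1 hx⟩))
    fun _ hx hxy => ((compl_adj ..).1 (mem_nonNbr.1 hx)).2 hxy.symm

lemma nonAdjCount_core_mem {G : SimpleGraph (Fin n)} {i y : Fin n} (hy : IsCore G i y)
    (hyE : y ∈ oddSet G i) : #(nonNbr G y) + 1 ≤ nonAdjCount G (oddSet G i) y := by
  classical
  have : y ∉ nonNbr G y := by simp [mem_nonNbr]
  rw [← Finset.card_insert_of_notMem this]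
  refine card_le_nonAdjCount (fun x hx => ?_) fun x hx hxy => ?_
  · rcases Finset.mem_insert.1 hx with rfl | hx
    · exact hyE
    · exact mem_oddSet.2 (Or.inr ⟨y, hy, mem_nonNbr.1 hx⟩)
  · rcases Finset.mem_insert.1 hx with rfl | hx
    · exact hxy.ne rfl
    · exact ((compl_adj ..).1 (mem_nonNbr.1 hx)).2 hxy.symm

lemma nonAdjCount_of_no_nbr {G : SimpleGraph (Fin n)} {i y : Fin n}
    (hy : ∀ a, Gᶜ.Adj i a → ¬ G.Adj a y) :
    #(nonNbr G i) ≤ nonAdjCount G (oddSet G i) y :=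
  card_le_nonAdjCount (nonNbr_subset_oddSet G i) fun x hx => hy x (mem_nonNbr.1 hx)

/-- A vertex outside the core misses all but at most one non-neighbour of `i`. -/
lemma exists_almost_nonAdj {G : SimpleGraph (Fin n)} {i y : Fin n} (hy : ¬ IsCore G i y) :
    ∃ a, ∀ x ∈ (nonNbr G i).erase a, ¬ G.Adj x y := by
  by_cases h : ∃ a, Gᶜ.Adj i a ∧ G.Adj a y
  · obtain ⟨a, ha, hay⟩ := h
    refine ⟨a, fun x hx hxy => hy ?_⟩
    rw [Finset.mem_erase, mem_nonNbr] at hx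
    exact ⟨x, a, hx.1, hx.2, ha, hxy, hay⟩
  · push Not at h
    exact ⟨i, fun x hx => h x (mem_nonNbr.1 (Finset.mem_of_mem_erase hx))⟩

lemma nonAdjCount_not_core {G : SimpleGraph (Fin n)} {i y : Fin n} (hy : ¬ IsCore G i y) :
    #(nonNbr G i) ≤ nonAdjCount G (oddSet G i) y + 1 := by
  classical
  obtain ⟨a, ha⟩ := exists_almost_nonAdj hy
  have := card_le_nonAdjCount
    ((Finset.erase_subset a _).trans (nonNbr_subset_oddSet G i)) ha
  have := Finset.pred_card_le_card_erase (s := nonNbr G i) (a := a)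
  omega

lemma nonAdjCount_not_core_mem {G : SimpleGraph (Fin n)} {i y : Fin n} (hy : ¬ IsCore G i y)
    (hyE : y ∈ oddSet G i) (hyA : ¬ Gᶜ.Adj i y) :
    #(nonNbr G i) ≤ nonAdjCount G (oddSet G i) y := by
  classical
  obtain ⟨a, ha⟩ := exists_almost_nonAdj hy
  have h1 : y ∉ (nonNbr G i).erase a := fun h => hyA (mem_nonNbr.1 (Finset.mem_of_mem_erase h))
  have h2 : #(insert y ((nonNbr G i).erase a)) ≤ nonAdjCount G (oddSet G i) y := by
    refine card_le_nonAdjCount (fun x hx => ?_) fun x hx hxy => ?_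
    · rcases Finset.mem_insert.1 hx with rfl | hx
      · exact hyE
      · exact nonNbr_subset_oddSet G i (Finset.mem_of_mem_erase hx)
    · rcases Finset.mem_insert.1 hx with rfl | hx
      · exact hxy.ne rfl
      · exact ha x hx hxy
  rw [Finset.card_insert_of_notMem h1] at h2
  have := Finset.pred_card_le_card_erase (s := nonNbr G i) (a := a)
  omega

/-- The degrees of `G` are those of `d`, lowered by one at `i` and at `j`, and `d` takes values
between `c₂` and `c₁`. -/
structure Deficient (G : SimpleGraph (Fin n)) (i j : Fin n) (c₁ c₂ : ℕ) (d : Fin n → ℕ) :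
    Prop where
  deg : ∀ k, (degSeq G k : ℤ) = d k - (if k = i then 1 else 0) - (if k = j then 1 else 0)
  lower : ∀ k, c₂ ≤ d k
  upper : ∀ k, d k ≤ c₁

lemma Deficient.symm {G : SimpleGraph (Fin n)} {i j : Fin n} {c₁ c₂ : ℕ} {d : Fin n → ℕ}
    (h : Deficient G i j c₁ c₂ d) : Deficient G j i c₁ c₂ d :=
  ⟨fun k => by rw [h.deg]; ring, h.lower, h.upper⟩

variable {G : SimpleGraph (Fin n)} {i j : Fin n} {c₁ c₂ : ℕ} {d : Fin n → ℕ}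

lemma Stuck.right_notMem (hs : Stuck G i j) : j ∉ oddSet G i := by
  rw [mem_oddSet]
  rintro (h | ⟨c, ⟨a, -, -, ha, -, hac, -⟩, h⟩)
  · exact ((compl_adj ..).1 h).2 hs.adj
  · exact hs.three a c ha hac h

lemma Stuck.notMem_of_nbr (hs : Stuck G i j) {a c : Fin n} (ha : Gᶜ.Adj i a) (hac : G.Adj a c) :
    c ∉ oddSet G j :=
  fun h => hs.odd a (mem_oddSet.2 (Or.inl ha)) c h hac

lemma not_isCore_self : ¬ IsCore G i i := by
  rintro ⟨a, -, -, ha, -, hac, -⟩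
  exact ((compl_adj ..).1 ha).2 hac.symm

lemma Deficient.card_nonNbr_left (hd : Deficient G i j c₁ c₂ d) (hij : i ≠ j) :
    (#(nonNbr G i) : ℤ) = n - d i := by
  rw [card_nonNbr, hd.deg]; simp [hij]

lemma Deficient.le_card_nonNbr (hd : Deficient G i j c₁ c₂ d) (y : Fin n) :
    (n : ℤ) - 1 - d y ≤ #(nonNbr G y) := by
  rw [card_nonNbr, hd.deg]; split_ifs <;> omega

lemma nonAdjCount_self (hd : Deficient G i j c₁ c₂ d) (hij : i ≠ j) :
    (n : ℤ) - d i ≤ nonAdjCount G (oddSet G i) i := by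
  rw [← hd.card_nonNbr_left hij]
  exact_mod_cast nonAdjCount_of_no_nbr fun a ha h => ((compl_adj ..).1 ha).2 h.symm

lemma le_nonAdjCount (hd : Deficient G i j c₁ c₂ d) (hij : i ≠ j) (y : Fin n) :
    (n : ℤ) - 1 - c₁ ≤ nonAdjCount G (oddSet G i) y := by
  have h1 := hd.upper y
  have h2 := hd.upper i
  by_cases hy : IsCore G i y
  · have := nonAdjCount_core hy
    have := hd.le_card_nonNbr y
    omega
  · have := nonAdjCount_not_core hy
    have := hd.card_nonNbr_left hij
    omega

/-- Vertices with the least possible number of non-neighbours in `oddSet G i`. -/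
lemma nonAdjCount_tight (hd : Deficient G i j c₁ c₂ d) (hij : i ≠ j) {y : Fin n}
    (hy : (nonAdjCount G (oddSet G i) y : ℤ) = n - 1 - c₁) :
    (∃ a, Gᶜ.Adj i a ∧ G.Adj a y) ∧ (y ∈ oddSet G i → Gᶜ.Adj i y) := by
  have h1 := hd.upper y
  have h2 := hd.upper i
  have h3 := hd.card_nonNbr_left hij
  constructor
  · by_contra! h
    have := nonAdjCount_of_no_nbr h
    omega
  · intro hyE
    by_contra hyA
    by_cases hc : IsCore G i y
    · have := nonAdjCount_core_mem hc hyE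
      have := hd.le_card_nonNbr y
      omega
    · have := nonAdjCount_not_core_mem hc hyE hyA
      omega

/-- The two non-negative excesses whose sum measures how far the counting inequality is from
being tight; the second one already absorbs the deficiency at `i`. -/
lemma excess_identity (hs : Stuck G i j) (hd : Deficient G i j c₁ c₂ d) :
    ∑ x ∈ oddSet G i, ((d x : ℤ) - c₂) + (∑ y ∈ (oddSet G j)ᶜ,
      ((nonAdjCount G (oddSet G i) y : ℤ) - (n - 1 - c₁)) - (if i ∈ oddSet G i then 1 else 0))
    = #(oddSet G i) * (n - #(oddSet G j)) - c₂ * #(oddSet G i)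
      - (n - 1 - c₁) * (n - #(oddSet G j)) := by
  classical
  have h := sum_deg_add_sum_nonAdjCount G (oddSet G i) (oddSet G j)ᶜ fun x hx y hxy =>
    Finset.mem_compl.2 fun hy => hs.odd x hx y hy hxy
  have h1 : ((#(oddSet G j)ᶜ : ℕ) : ℤ) = n - #(oddSet G j) := by
    have := Finset.card_add_card_compl (oddSet G j)
    rw [Fintype.card_fin] at this
    omega
  have h2 : ∑ x ∈ oddSet G i, (degSeq G x : ℤ)
      = ∑ x ∈ oddSet G i, (d x : ℤ) - (if i ∈ oddSet G i then 1 else 0) := by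
    simp only [hd.deg, Finset.sum_sub_distrib, Finset.sum_ite_eq', hs.right_notMem, if_false,
      sub_zero]
  simp only [Finset.sum_sub_distrib, Finset.sum_const, nsmul_eq_mul]
  rw [h1] at h ⊢
  rw [h2] at h
  linarith

lemma Stuck.ne (hs : Stuck G i j) : i ≠ j := hs.adj.ne

/-- The second excess is positive: `i` contributes at least one, and if `i` is itself in the odd
set then so does some further vertex. -/
lemma one_le_excess (hs : Stuck G i j) (hd : Deficient G i j c₁ c₂ d) :
    1 ≤ ∑ y ∈ (oddSet G j)ᶜ,
      ((nonAdjCount G (oddSet G i) y : ℤ) - (n - 1 - c₁)) - (if i ∈ oddSet G i then 1 else 0) := by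
  classical
  have hi : i ∈ (oddSet G j)ᶜ := Finset.mem_compl.2 hs.symm.right_notMem
  have hn : ∀ y ∈ (oddSet G j)ᶜ,
      0 ≤ (nonAdjCount G (oddSet G i) y : ℤ) - (n - 1 - c₁) := fun y _ => by
    have := le_nonAdjCount hd hs.ne y
    omega
  have h1 := nonAdjCount_self hd hs.ne
  have h2 := hd.upper i
  split_ifs with hiE
  · obtain h | ⟨a, hac, ha⟩ := mem_oddSet.1 hiE
    · simp at h
    have ha' := ha.symm
    obtain ⟨b, -, -, hb, -, hba, -⟩ := id hac
    have haF : a ∈ (oddSet G j)ᶜ := Finset.mem_compl.2 (hs.notMem_of_nbr hb hba)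
    have h3 := nonAdjCount_core_mem hac (mem_oddSet.2 (Or.inl ha'))
    have h4 := hd.le_card_nonNbr a
    have h5 := hd.upper a
    have h6 := Finset.add_le_sum hn hi haF ha'.ne
    omega
  · have := Finset.single_le_sum hn hi
    omega

lemma excess_nonneg (hd : Deficient G i j c₁ c₂ d) :
    ∀ x ∈ oddSet G i, 0 ≤ (d x : ℤ) - c₂ := fun x _ => by
  have := hd.lower x
  omega

lemma count_ineq (hs : Stuck G i j) (hd : Deficient G i j c₁ c₂ d) :
    (c₂ : ℤ) * #(oddSet G i) + (n - 1 - c₁) * (n - #(oddSet G j)) + 1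
      ≤ #(oddSet G i) * (n - #(oddSet G j)) := by
  have h1 := excess_identity hs hd
  have h2 := one_le_excess hs hd
  have h3 := Finset.sum_nonneg (excess_nonneg hd)
  linarith

/-- The structure forced by equality in `count_ineq`. -/
lemma count_tight (hs : Stuck G i j) (hd : Deficient G i j c₁ c₂ d) (hc : c₂ < c₁)
    (heq : (c₂ : ℤ) * #(oddSet G i) + (n - 1 - c₁) * (n - #(oddSet G j)) + 1
      = #(oddSet G i) * (n - #(oddSet G j))) :
    (∀ x ∈ oddSet G i, d x = c₂) ∧ d i = c₁ ∧
      ∀ y, y ∉ oddSet G j → y ≠ i → (nonAdjCount G (oddSet G i) y : ℤ) = n - 1 - c₁ := by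
  classical
  have h1 := excess_identity hs hd
  have h2 := one_le_excess hs hd
  have h3 := Finset.sum_nonneg (excess_nonneg hd)
  have hi : i ∈ (oddSet G j)ᶜ := Finset.mem_compl.2 hs.symm.right_notMem
  have hn : ∀ y ∈ (oddSet G j)ᶜ,
      0 ≤ (nonAdjCount G (oddSet G i) y : ℤ) - (n - 1 - c₁) := fun y _ => by
    have := le_nonAdjCount hd hs.ne y
    omega
  have k1 := nonAdjCount_self hd hs.ne
  have k2 := hd.upper i
  have hE : ∀ x ∈ oddSet G i, d x = c₂ := by
    intro x hx
    have := Finset.single_le_sum (excess_nonneg hd) hx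
    have := hd.lower x
    omega
  have hdi : d i = c₁ := by
    have h4 := Finset.single_le_sum hn hi
    by_contra hne
    by_cases hiE : i ∈ oddSet G i
    · obtain h | ⟨a, hac, ha⟩ := mem_oddSet.1 hiE
      · simp at h
      have ha' := ha.symm
      obtain ⟨b, -, -, hb, -, hba, -⟩ := id hac
      have haF : a ∈ (oddSet G j)ᶜ := Finset.mem_compl.2 (hs.notMem_of_nbr hb hba)
      have h3 := nonAdjCount_core_mem hac (mem_oddSet.2 (Or.inl ha'))
      have h4 := hd.le_card_nonNbr a
      have h5 := hE a (mem_oddSet.2 (Or.inl ha'))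
      have h6 := Finset.add_le_sum hn hi haF ha'.ne
      rw [if_pos hiE] at h1 h2
      omega
    · rw [if_neg hiE] at h1 h2
      omega
  have hiE : i ∉ oddSet G i := fun h => by
    have := hE i h
    omega
  refine ⟨hE, hdi, fun y hy hyi => ?_⟩
  rw [if_neg hiE] at h1 h2
  have hyF : y ∈ (oddSet G j)ᶜ := Finset.mem_compl.2 hy
  have h6 := Finset.add_le_sum hn hi hyF (Ne.symm hyi)
  have := hn y hyF
  omega


/-- If both odd sets have the same size and both counts are tight, then the odd sets coincide and
consist exactly of vertices with `d = c₂`, while all the others have `d = c₁`. -/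
lemma eq_of_tight (hs : Stuck G i j) (hd : Deficient G i j c₁ c₂ d) (hc : c₂ < c₁)
    (hcard : #(oddSet G i) = #(oddSet G j))
    (h1 : (c₂ : ℤ) * #(oddSet G i) + (n - 1 - c₁) * (n - #(oddSet G j)) + 1
      = #(oddSet G i) * (n - #(oddSet G j)))
    (h2 : (c₂ : ℤ) * #(oddSet G j) + (n - 1 - c₁) * (n - #(oddSet G i)) + 1
      = #(oddSet G j) * (n - #(oddSet G i))) :
    ∀ y, d y = if y ∈ oddSet G i then c₂ else c₁ := by
  classical
  obtain ⟨hE, hdi, hF⟩ := count_tight hs hd hc h1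
  obtain ⟨-, hdj, hF'⟩ := count_tight hs.symm hd.symm hc h2
  -- Neighbours of `nonNbr G i` are adjacent to all neighbours of `nonNbr G j`.
  have cross : ∀ y z, y ≠ z → (∃ a, Gᶜ.Adj i a ∧ G.Adj a y) → (∃ b, Gᶜ.Adj j b ∧ G.Adj b z) →
      G.Adj y z := by
    rintro y z hyz ⟨a, ha, hay⟩ ⟨b, hb, hbz⟩
    by_contra h
    exact hs.five a y z b ha hay ((compl_adj ..).2 ⟨hyz, h⟩) hbz.symm hb.symm
  have hsub : oddSet G i ⊆ oddSet G j := by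
    by_contra hns
    have hns' : ¬ oddSet G j ⊆ oddSet G i := fun h =>
      hns (Finset.eq_of_subset_of_card_le h hcard.le).symm.subset
    obtain ⟨y, hy, hy'⟩ := Finset.not_subset.1 hns
    obtain ⟨z, hz, hz'⟩ := Finset.not_subset.1 hns'
    have hyi : y ≠ i := by
      rintro rfl
      have := hE _ hy
      omega
    have hzj : z ≠ j := by
      rintro rfl
      have := (count_tight hs.symm hd.symm hc h2).1 _ hz
      omega
    obtain ⟨ya, yA⟩ := nonAdjCount_tight hd hs.ne (hF y hy' hyi)
    obtain ⟨zb, zB⟩ := nonAdjCount_tight hd.symm hs.symm.ne (hF' z hz' hzj)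
    exact hs.three y z (yA hy) (cross y z (fun h => hz' (h ▸ hy)) ya zb) (zB hz).symm
  have heq := Finset.eq_of_subset_of_card_le hsub hcard.ge
  intro y
  split_ifs with hyE
  · exact hE y hyE
  by_contra hlt
  have hyi : y ≠ i := by rintro rfl; exact hlt hdi
  have hyj : y ≠ j := by rintro rfl; exact hlt hdj
  have hyF := hF y (heq ▸ hyE) hyi
  -- `y` has more non-neighbours than `oddSet G i` accounts for.
  obtain ⟨z, hz, hzE⟩ : ∃ z, Gᶜ.Adj y z ∧ z ∉ oddSet G i := by
    by_contra! h
    have k1 := card_le_nonAdjCount (G := G) (S := nonNbr G y) (E := oddSet G i) (y := y)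
      (fun x hx => h x (mem_nonNbr.1 hx))
      fun x hx hxy => ((compl_adj ..).1 (mem_nonNbr.1 hx)).2 hxy.symm
    have k2 := hd.le_card_nonNbr y
    have k3 := hd.upper y
    omega
  have hzj : z ≠ j := by
    rintro rfl
    exact hyE (heq ▸ mem_oddSet.2 (Or.inl hz.symm))
  have ya := (nonAdjCount_tight hd hs.ne hyF).1
  have zb := (nonAdjCount_tight hd.symm hs.symm.ne (hF' z hzE hzj)).1
  exact ((compl_adj ..).1 hz).2 (cross y z ((compl_adj ..).1 hz).1 ya zb)

end Stuck

/-! ### Full graphicality and the final count -/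

section Graphic

variable {n : ℕ}

/-- The easy half of the Erdős–Gallai theorem, for an arbitrary vertex set `F`. -/
lemma sum_deg_le (H : SimpleGraph (Fin n)) (F : Finset (Fin n)) :
    ∑ y ∈ F, (degSeq H y : ℤ) ≤ #F * ((#F : ℤ) - 1) + ∑ x ∈ Fᶜ, (degSeq H x : ℤ) := by
  classical
  have h1 : ∀ y ∈ F, (degSeq H y : ℤ) ≤ (#F - 1) + ∑ x ∈ Fᶜ, if H.Adj x y then 1 else 0 := by
    intro y hy
    rw [degSeq_eq_sum, ← Finset.sum_add_sum_compl F]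
    refine add_le_add ?_ (le_of_eq (Finset.sum_congr rfl fun x _ => by simp only [adj_comm]))
    rw [Finset.sum_boole]
    have : #{x ∈ F | H.Adj y x} ≤ #(F.erase y) := Finset.card_le_card fun x hx => by
      rw [Finset.mem_filter] at hx
      exact Finset.mem_erase.2 ⟨hx.2.ne', hx.1⟩
    have := Finset.card_erase_add_one hy
    omega
  refine (Finset.sum_le_sum h1).trans ?_
  rw [Finset.sum_add_distrib, Finset.sum_const, nsmul_eq_mul, Finset.sum_comm]
  refine add_le_add le_rfl (Finset.sum_le_sum fun x _ => ?_)
  rw [degSeq_eq_sum]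
  exact Finset.sum_le_sum_of_subset_of_nonneg (subset_univ F) fun y _ _ => by
    split_ifs <;> simp

/-- Full graphicality applied to the sequence `c₁^f, c₂ + t, c₂^(e-1)`, where the correction
`t ≤ 1` repairs the parity of the sum. -/
lemma fullyGraphic_ineq {c₁ c₂ : ℕ}
    (hfg : ∀ d : Fin n → ℕ, memDV c₁ c₂ d → IsGraphic d) (e f t : ℕ) (hef : f + e = n)
    (he : 0 < e) (ht : c₂ + t ≤ c₁) (hpar : Even (f * c₁ + (e * c₂ + t))) :
    (f : ℤ) * c₁ ≤ f * (f - 1) + (e * c₂ + t) := by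
  classical
  set d : Fin n → ℕ := fun k => if (k : ℕ) < f then c₁ else c₂ + if (k : ℕ) = f then t else 0
    with hd
  set F : Finset (Fin n) := {k | (k : ℕ) < f} with hF
  have hcF : #F = f := by
    rw [hF, Fin.card_filter_val_lt]; omega
  have hcF' : #Fᶜ = e := by
    have := Finset.card_add_card_compl F
    rw [Fintype.card_fin] at this
    omega
  have s1 : ∑ k ∈ F, d k = f * c₁ := by
    rw [Finset.sum_congr rfl (g := fun _ => c₁)]
    · simp [hcF]
    · intro k hk
      have : (k : ℕ) < f := by simpa [hF] using hk
      simp [hd, this]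
  have s2 : ∑ k ∈ Fᶜ, d k = e * c₂ + t := by
    rw [Finset.sum_congr rfl (g := fun k => c₂ + if k = ⟨f, by omega⟩ then t else 0)]
    · rw [Finset.sum_add_distrib, Finset.sum_const, hcF', Finset.sum_ite_eq',
        if_pos (by simp [hF]), smul_eq_mul]
    · intro k hk
      have : ¬ (k : ℕ) < f := by simpa [hF] using hk
      simp [hd, this, Fin.ext_iff]
  have hm : memDV c₁ c₂ d := by
    refine ⟨fun a b hab => ?_, fun k => ?_, ?_⟩
    · have : (a : ℕ) ≤ b := hab
      simp only [hd]
      split_ifs <;> omega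
    · simp only [hd]
      split_ifs <;> omega
    · rw [← Finset.sum_add_sum_compl F, s1, s2]
      exact hpar
  obtain ⟨H, hH⟩ := hfg d hm
  have := sum_deg_le H F
  simp only [hH] at this
  rw [hcF] at this
  have q1 : ∑ k ∈ F, (d k : ℤ) = f * c₁ := by exact_mod_cast s1
  have q2 : ∑ k ∈ Fᶜ, (d k : ℤ) = e * c₂ + t := by exact_mod_cast s2
  linarith

/-- By symmetry of `Stuck`, the size condition costs no generality. -/
lemma not_stuck {c₁ c₂ : ℕ} (h1 : c₁ < n)
    (hfg : ∀ d : Fin n → ℕ, memDV c₁ c₂ d → IsGraphic d) {d : Fin n → ℕ} (hd : memDV c₁ c₂ d)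
    {G : SimpleGraph (Fin n)} {i j : Fin n} (hD : Deficient G i j c₁ c₂ d)
    (hle : #(oddSet G i) ≤ #(oddSet G j)) : ¬ Stuck G i j := by
  classical
  intro hs
  have k1 := count_ineq hs hD
  have k2 := count_ineq hs.symm hD.symm
  have hpos : (n : ℤ) - c₁ ≤ #(oddSet G i) := by
    have := hD.card_nonNbr_left hs.ne
    have := hD.upper i
    have := Finset.card_le_card (nonNbr_subset_oddSet G i)
    omega
  obtain ⟨f, hf⟩ : ∃ f, f + #(oddSet G i) = n :=
    ⟨n - #(oddSet G i), Nat.sub_add_cancel ((Finset.card_le_univ _).trans (by simp))⟩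
  have hsum : ∀ c, ∑ y, (if y ∈ oddSet G i then c₂ else c) = f * c + #(oddSet G i) * c₂ := by
    intro c
    rw [Finset.sum_ite, Finset.sum_const, Finset.sum_const, smul_eq_mul, smul_eq_mul]
    have : (univ.filter (fun y => y ∈ oddSet G i)) = oddSet G i := by ext; simp
    have e2 : (univ.filter (fun y => y ∉ oddSet G i)) = (oddSet G i)ᶜ := by ext; simp
    have := Finset.card_add_card_compl (oddSet G i)
    rw [Fintype.card_fin] at this
    rw [‹univ.filter (fun y => y ∈ oddSet G i) = oddSet G i›, e2,
      show #(oddSet G i)ᶜ = f by omega, add_comm]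
  -- Passing from `e'` down to `e` gains `(e - p) * (e' - e)`, which is at least `e' - e`.
  have hEE : ∀ e e' : ℤ, n - c₁ ≤ e → e ≤ e' → c₂ * e + (n - 1 - c₁) * (n - e') + 1
      ≤ e * (n - e') → c₂ * e + (n - 1 - c₁) * (n - e) + 1 + (e' - e) ≤ e * (n - e) := by
    intro e e' q1 q2 q3
    nlinarith [mul_nonneg (sub_nonneg.2 q1) (sub_nonneg.2 q2)]
  have k3 := hEE _ _ hpos (by exact_mod_cast hle) k1
  have hfz : (n : ℤ) - #(oddSet G i) = f := by omega
  rw [hfz] at k3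
  by_cases hpar : Even (f * c₁ + #(oddSet G i) * c₂)
  · have := fullyGraphic_ineq hfg _ f 0 hf (by omega)
      ((hD.lower i).trans (hD.upper i)) (by simpa using hpar)
    push_cast at this
    have hle' : (#(oddSet G i) : ℤ) ≤ #(oddSet G j) := by exact_mod_cast hle
    nlinarith
  · have hc : c₂ < c₁ := by
      refine lt_of_le_of_ne ((hD.lower i).trans (hD.upper i)) fun hcc => hpar ?_
      have hall : ∀ y, d y = if y ∈ oddSet G i then c₂ else c₁ := fun y => by
        have := hD.lower y; have := hD.upper y
        split_ifs <;> omega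
      rw [← hsum, ← Finset.sum_congr rfl fun y _ => hall y]
      exact hd.2.2
    have := fullyGraphic_ineq hfg _ f 1 hf (by omega) hc
      (by rw [← add_assoc]; exact Nat.even_add_one.2 hpar)
    push_cast at this
    have hle' : (#(oddSet G i) : ℤ) ≤ #(oddSet G j) := by exact_mod_cast hle
    have hcard : (#(oddSet G i) : ℤ) = #(oddSet G j) := by nlinarith
    rw [← hcard] at k1 k2
    rw [hfz] at k1 k2
    have t1 : (c₂ : ℤ) * #(oddSet G i) + (n - 1 - c₁) * f + 1 = #(oddSet G i) * f := by
      refine le_antisymm k1 ?_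
      nlinarith
    refine hpar ?_
    rw [← hsum, ← Finset.sum_congr rfl fun y _ =>
      eq_of_tight hs hD hc (by exact_mod_cast hcard) ?_ ?_ y]
    · exact hd.2.2
    · rw [← hcard, hfz]; exact t1
    · rw [← hcard, hfz]; exact t1

lemma augmentable {c₁ c₂ : ℕ} (h1 : c₁ < n)
    (hfg : ∀ d : Fin n → ℕ, memDV c₁ c₂ d → IsGraphic d) {d : Fin n → ℕ} (hd : memDV c₁ c₂ d)
    {G : SimpleGraph (Fin n)} {i j : Fin n} (hij : i ≠ j) (hD : Deficient G i j c₁ c₂ d) :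
    Augmentable G i j := by
  by_contra h
  have hs := stuck_of_not_augmentable hij h
  rcases le_total #(oddSet G i) #(oddSet G j) with hle | hle
  · exact not_stuck h1 hfg hd hD hle hs
  · exact not_stuck h1 hfg hd hD.symm hle hs.symm

/-- A deficient graph is determined by its augmentation and the six inner vertices of the walk. -/
lemma numR_deficient_le {c₁ c₂ : ℕ} (h1 : c₁ < n)
    (hfg : ∀ d : Fin n → ℕ, memDV c₁ c₂ d → IsGraphic d) {d : Fin n → ℕ} (hd : memDV c₁ c₂ d)
    {i j : Fin n} (hij : i ≠ j) :
    numR n (fun k => (d k : ℤ) - (if k = i then 1 else 0) - (if k = j then 1 else 0))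
      ≤ numR n (fun k => (d k : ℤ)) * n ^ 6 := by
  have hA : ∀ G : {G : SimpleGraph (Fin n) // ∀ k, (degSeq G k : ℤ)
      = (d k : ℤ) - (if k = i then 1 else 0) - (if k = j then 1 else 0)},
      Augmentable G.1 i j := fun G =>
    augmentable h1 hfg hd hij ⟨G.2, fun k => (hd.2.1 k).1, fun k => (hd.2.1 k).2⟩
  choose v hv using hA
  let φ : {G : SimpleGraph (Fin n) // ∀ k, (degSeq G k : ℤ)
      = (d k : ℤ) - (if k = i then 1 else 0) - (if k = j then 1 else 0)} →
      {G : SimpleGraph (Fin n) // ∀ k, (degSeq G k : ℤ) = (d k : ℤ)} × (Fin 6 → Fin n) :=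
    fun G => (⟨G.1 ∆ walkGraph i j (v G), fun k => by rw [hv G, G.2]; ring⟩, v G)
  have hφ : Function.Injective φ := by
    intro G G' h
    have h1 : G.1 ∆ walkGraph i j (v G) = G'.1 ∆ walkGraph i j (v G') :=
      congrArg (fun p => p.1.1) h
    have h2 : v G = v G' := congrArg (fun p => p.2) h
    rw [h2] at h1
    exact Subtype.ext (symmDiff_left_injective _ h1)
  have := Nat.card_le_card_of_injective φ hφ
  rw [Nat.card_prod] at this
  simpa [numR] using this

end Graphic

/-- if every sequence in `𝒟(n,c₁,c₂)` is graphic, then for every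
`D ∈ 𝒟(n,c₁,c₂)` one has `∑_{1≤i<j≤n} N(D + 1^{−i}_{−j}) ≤ 3·n⁹·N(D)`. -/
theorem stmt10 (n c₁ c₂ : ℕ) (h1 : c₁ < n) (h2 : c₂ ≤ c₁)
    (hfg : ∀ d : Fin n → ℕ, memDV c₁ c₂ d → IsGraphic d)
    (d : Fin n → ℕ) (hd : memDV c₁ c₂ d) :
    (∑ i : Fin n, ∑ j : Fin n, if i < j then
        numR n (fun k => (d k : ℤ) - (if k = i then 1 else 0) -
          (if k = j then 1 else 0)) else 0)
      ≤ 3 * n ^ 9 * numR n (fun k => (d k : ℤ)) := by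
  calc _ ≤ ∑ _i : Fin n, ∑ _j : Fin n, numR n (fun k => (d k : ℤ)) * n ^ 6 := by
        refine Finset.sum_le_sum fun i _ => Finset.sum_le_sum fun j _ => ?_
        split_ifs with hij
        · exact numR_deficient_le h1 hfg hd hij.ne
        · exact Nat.zero_le _
    _ = n ^ 8 * numR n (fun k => (d k : ℤ)) := by
        simp only [Finset.sum_const, card_univ, Fintype.card_fin, smul_eq_mul]
        ring
    _ ≤ 3 * n ^ 9 * numR n (fun k => (d k : ℤ)) := by
        refine Nat.mul_le_mul_right _ ?_
        have : n ^ 8 ≤ n ^ 9 := Nat.pow_le_pow_right (by omega) (by norm_num)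
        omega
end

section
/- For every natural number m ≥ 4, let D_m be the sequence of length 2m given by (m, m, 3, 1, 1, …, 1) (with 2m−3 ones). Then: (i) D_m is graphic; (ii) for every 1 ≤ k ≤ 2m, ∑_{i=1}^k (D_m)ᵢ ≤ k·(k−1) + 1·(2m−k) + 1; and (iii) with n = 2m, Σ = 4m, c₁ = m, c₂ = 1, the inequality (Σ − n·c₂)·(n·c₁ − Σ) ≤ (c₁ − c₂)·[(Σ − n·c₂)·(n − c₁ − 1) + (n·c₁ − Σ)·c₂] fails. -/
/-- The triangle vertex to which the leaf `i ≥ 3` is attached: the leaf `3` hangs from `2`, the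
`m - 2` leaves `4, …, m + 1` from `0`, and the remaining `m - 2` leaves from `1`. -/
def parentOf (m i : ℕ) : ℕ := if i = 3 then 2 else if i < m + 2 then 0 else 1

/-- The triangle on `{0, 1, 2}` with every later vertex `i` attached as a leaf to
`parentOf m i`. -/
def starTriangle (m : ℕ) : SimpleGraph (Fin (2 * m)) where
  Adj i j := ((i : ℕ) < 3 ∧ (j : ℕ) < 3 ∧ (i : ℕ) ≠ j) ∨
    (3 ≤ (i : ℕ) ∧ (j : ℕ) = parentOf m i) ∨ (3 ≤ (j : ℕ) ∧ (i : ℕ) = parentOf m j)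
  symm := ⟨fun i j h => by
    rcases h with ⟨h1, h2, h3⟩ | h | h
    · exact Or.inl ⟨h2, h1, h3.symm⟩
    · exact Or.inr (Or.inr h)
    · exact Or.inr (Or.inl h)⟩
  loopless := ⟨fun i h => by
    unfold parentOf at h
    split_ifs at h <;> omega⟩

lemma natCard_fin_subtype {n : ℕ} (P : Fin n → Prop) (S : Finset ℕ)
    (hS : ∀ x ∈ S, x < n) (h : ∀ j : Fin n, P j ↔ (j : ℕ) ∈ S) :
    Nat.card {j : Fin n // P j} = S.card := by
  classical
  rw [Nat.card_eq_fintype_card, Fintype.card_subtype, ← Finset.card_map Fin.valEmbedding]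
  congr 1
  ext x
  simp only [Finset.mem_map, Finset.mem_filter, Finset.mem_univ, true_and,
    Fin.valEmbedding_apply, h]
  constructor
  · rintro ⟨j, hj, rfl⟩; exact hj
  · intro hx; exact ⟨⟨x, hS x hx⟩, hx, rfl⟩

lemma psum_eq_sum_range {n : ℕ} (d : Fin n → ℕ) (f : ℕ → ℕ) (hf : ∀ i : Fin n, d i = f i)
    (k : ℕ) (hk : k ≤ n) : psum d k = ∑ i ∈ Finset.range k, f i := by
  unfold psum
  simp only [hf]
  rw [Fin.sum_univ_eq_sum_range (fun i => if i < k then f i else 0) n, ← Finset.sum_filter]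
  congr 1
  ext x
  simp only [Finset.mem_filter, Finset.mem_range]
  omega

lemma psum_add_three (m j : ℕ) :
    ∑ i ∈ Finset.range (j + 3), (if i < 2 then m else if i = 2 then 3 else 1)
      = 2 * m + (j + 3) := by
  induction j with
  | zero => simp [Finset.sum_range_succ]; omega
  | succ j ih =>
    rw [show j + 1 + 3 = (j + 3) + 1 by omega, Finset.sum_range_succ, ih,
      if_neg (by omega), if_neg (by omega)]
    omega

lemma degSeq_starTriangle (m : ℕ) (hm : 4 ≤ m) (i : Fin (2 * m)) :
    degSeq (starTriangle m) i = if (i : ℕ) < 2 then m else if (i : ℕ) = 2 then 3 else 1 := by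
  obtain ⟨i, hi⟩ := i
  unfold degSeq
  have key : i = 0 ∨ i = 1 ∨ i = 2 ∨ 3 ≤ i := by omega
  rcases key with rfl | rfl | rfl | h3
  · rw [natCard_fin_subtype _ ({1, 2} ∪ Finset.Ico 4 (m + 2))]
    · rw [Finset.card_union_of_disjoint]
      · simp; omega
      · rw [Finset.disjoint_left]; intro x; simp; omega
    · intro x; simp; omega
    · rintro ⟨j, hj⟩
      simp only [starTriangle, parentOf, Finset.mem_union, Finset.mem_insert,
        Finset.mem_singleton, Finset.mem_Ico]
      split_ifs <;> simp <;> omega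
  · rw [natCard_fin_subtype _ ({0, 2} ∪ Finset.Ico (m + 2) (2 * m))]
    · rw [Finset.card_union_of_disjoint]
      · simp; omega
      · rw [Finset.disjoint_left]; intro x; simp; omega
    · intro x; simp; omega
    · rintro ⟨j, hj⟩
      simp only [starTriangle, parentOf, Finset.mem_union, Finset.mem_insert,
        Finset.mem_singleton, Finset.mem_Ico]
      split_ifs <;> simp <;> omega
  · rw [natCard_fin_subtype _ {0, 1, 3}]
    · simp
    · intro x; simp; omega
    · rintro ⟨j, hj⟩
      simp only [starTriangle, parentOf, Finset.mem_insert, Finset.mem_singleton]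
      split_ifs <;> simp <;> omega
  · rw [natCard_fin_subtype _ {parentOf m i}]
    · rw [if_neg (by simp; omega), if_neg (by simp; omega)]; simp
    · intro x; simp only [Finset.mem_singleton, parentOf]; split_ifs <;> omega
    · rintro ⟨j, hj⟩
      simp only [starTriangle, parentOf, Finset.mem_singleton]
      split_ifs <;> simp <;> omega

/-- for `m ≥ 4` the sequence `D_m = (m, m, 3, 1, …, 1)` of
length `2m` is graphic; it satisfies
`∑_{i=1}^k (D_m)ᵢ ≤ k·(k−1) + 1·(2m−k) + 1` for all `1 ≤ k ≤ 2m`; and with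
`n = 2m`, `S = 4m`, `c₁ = m`, `c₂ = 1` the Jerrum–McKay–Sinclair inequality
`(S − n·c₂)·(n·c₁ − S) ≤ (c₁ − c₂)·[(S − n·c₂)·(n − c₁ − 1) + (n·c₁ − S)·c₂]`
fails. -/
theorem stmt12 (m : ℕ) (hm : 4 ≤ m) (D : Fin (2 * m) → ℕ)
    (hD : ∀ i : Fin (2 * m),
      D i = if (i : ℕ) < 2 then m else if (i : ℕ) = 2 then 3 else 1) :
    IsGraphic D ∧
    (∀ k, 1 ≤ k → k ≤ 2 * m →
      psum D k ≤ k * (k - 1) + 1 * (2 * m - k) + 1) ∧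
    ¬ (((4 * m : ℤ) - (2 * m : ℤ) * 1) * ((2 * m : ℤ) * m - 4 * m) ≤
        ((m : ℤ) - 1) * (((4 * m : ℤ) - (2 * m : ℤ) * 1) * ((2 * m : ℤ) - m - 1) +
          ((2 * m : ℤ) * m - 4 * m) * 1)) := by
  refine ⟨⟨starTriangle m, fun i => by rw [degSeq_starTriangle m hm, hD]⟩, ?_, ?_⟩
  · intro k hk1 hk
    rw [psum_eq_sum_range D (fun i => if i < 2 then m else if i = 2 then 3 else 1) hD k hk]
    have key : k = 1 ∨ k = 2 ∨ ∃ j, k = j + 3 := by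
      rcases k with _ | _ | _ | j
      · omega
      · simp
      · simp
      · exact Or.inr (Or.inr ⟨j, rfl⟩)
    rcases key with rfl | rfl | ⟨j, rfl⟩
    · simp; omega
    · simp [Finset.sum_range_succ]; omega
    · rw [psum_add_three, show j + 3 - 1 = j + 2 by omega]
      have : 2 * (j + 3) ≤ (j + 3) * (j + 2) := by nlinarith
      omega
  · have hm' : (4 : ℤ) ≤ m := by exact_mod_cast hm
    -- The left side minus the right side equals `2m(m - 3)`.
    nlinarith [mul_pos (show (0 : ℤ) < m by omega) (show (0 : ℤ) < m - 3 by omega)]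
end

section
/- For every natural number m ≥ 1, there is exactly one simple graph G on the labeled vertex set v₁,…,v_{2m} satisfying deg(vᵢ) = 2m − i for 1 ≤ i ≤ m and deg(vᵢ) = 2m + 1 − i for m+1 ≤ i ≤ 2m; that is, the degree sequence h_m = (2m−1, 2m−2, …, m+1, m, m, m−1, …, 2, 1) has exactly one labeled realization. -/
/-- The half graph on `2m` vertices: distinct `i, j` (0-indexed) are adjacent iff `i + j < 2m`. -/
def halfGraph (m : ℕ) : SimpleGraph (Fin (2 * m)) where
  Adj i j := i ≠ j ∧ (i : ℕ) + j < 2 * m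
  symm := ⟨fun i j h => ⟨h.1.symm, by have := h.2; omega⟩⟩
  loopless := ⟨fun i h => h.1 rfl⟩

lemma degSeq_halfGraph (m : ℕ) (i : Fin (2 * m)) :
    degSeq (halfGraph m) i =
      if (i : ℕ) < m then 2 * m - 1 - (i : ℕ) else 2 * m - (i : ℕ) := by
  classical
  -- Read in `ℕ`, the neighbours of `i` are the numbers below `2m - i` other than `i`.
  have h : degSeq (halfGraph m) i = ((Finset.range (2 * m - i)).erase (i : ℕ)).card := by
    rw [← Nat.card_eq_finsetCard]
    refine Nat.card_congr
      { toFun := fun j => ⟨j.1, ?_⟩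
        invFun := fun j => ⟨⟨j.1, ?_⟩, ?_⟩
        left_inv := fun j => rfl
        right_inv := fun j => rfl }
    · obtain ⟨j, hne, hlt⟩ := j
      rw [Finset.mem_erase, Finset.mem_range]
      exact ⟨fun e => hne (Fin.ext e.symm), by dsimp only; omega⟩
    · have := Finset.mem_range.1 (Finset.mem_erase.1 j.2).2
      omega
    · have hj := Finset.mem_erase.1 j.2
      have := Finset.mem_range.1 hj.2
      exact ⟨fun e => hj.1 (congrArg Fin.val e).symm, by dsimp only; omega⟩
  rw [h, Finset.card_erase_eq_ite, Finset.card_range]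
  simp only [Finset.mem_range]
  split_ifs <;> omega

/-- If the neighbourhoods of a vertex in two graphs are nested and have the same size, they
coincide. -/
lemma adj_iff_of_le {n : ℕ} {G H : SimpleGraph (Fin n)} {i : Fin n}
    (hd : degSeq G i = degSeq H i) (hs : ∀ j, G.Adj i j → H.Adj i j) (j : Fin n) :
    G.Adj i j ↔ H.Adj i j := by
  have h : {j | G.Adj i j} = {j | H.Adj i j} :=
    Set.eq_of_subset_of_ncard_le hs (le_of_eq hd.symm)
  exact Set.ext_iff.1 h j

/-- The peeling induction: a graph with the degrees of the half graph agrees with it at the `k`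
first and the `k` last vertices. -/
lemma adj_iff_halfGraph {m : ℕ} {G : SimpleGraph (Fin (2 * m))}
    (hd : ∀ i, degSeq G i = degSeq (halfGraph m) i) (k : ℕ) (hk : k ≤ m) :
    ∀ i : Fin (2 * m), ((i : ℕ) < k ∨ 2 * m ≤ i + k) →
      ∀ j, G.Adj i j ↔ (halfGraph m).Adj i j := by
  induction k with
  | zero => intro i hi; omega
  | succ k ih =>
    specialize ih (by omega)
    have first : ∀ i : Fin (2 * m), (i : ℕ) = k → ∀ j, G.Adj i j ↔ (halfGraph m).Adj i j := by
      intro i hi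
      refine adj_iff_of_le (hd i) fun j hij => ?_
      by_cases hj : 2 * m ≤ j + k
      · exact ((ih j (.inr hj) i).1 hij.symm).symm
      · exact ⟨hij.ne, by omega⟩
    have last : ∀ i : Fin (2 * m), (i : ℕ) + k + 1 = 2 * m →
        ∀ j, G.Adj i j ↔ (halfGraph m).Adj i j := by
      intro i hi j
      refine (adj_iff_of_le (hd i).symm (fun j hij => ?_) j).symm
      have hlt := hij.2
      rcases Nat.lt_or_ge j k with hj | hj
      · exact ((ih j (.inl hj) i).2 hij.symm).symm
      · exact ((first j (by omega) i).2 hij.symm).symm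
    intro i hi
    by_cases h₁ : (i : ℕ) = k
    · exact first i h₁
    by_cases h₂ : (i : ℕ) + k + 1 = 2 * m
    · exact last i h₂
    exact ih i (by omega)

/-- for `m ≥ 1`, the degree sequence
`h_m = (2m−1, 2m−2, …, m+1, m, m, m−1, …, 2, 1)` has exactly one labeled
realization (vertex `vᵢ`, `1 ≤ i ≤ 2m`, corresponds to index `i−1` of `Fin (2m)`). -/
theorem stmt15 (m : ℕ) (hm : 1 ≤ m) :
    ∃! G : SimpleGraph (Fin (2 * m)), ∀ i : Fin (2 * m),
      degSeq G i = if (i : ℕ) < m then 2 * m - 1 - (i : ℕ) else 2 * m - (i : ℕ) := by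
  refine ⟨halfGraph m, degSeq_halfGraph m, fun G hG => ?_⟩
  ext i j
  refine adj_iff_halfGraph (fun i => ?_) m le_rfl i (by omega) j
  rw [hG i, degSeq_halfGraph m i]
end

section
/- Let D = (d₁,…,dₙ) be a graphic sequence of natural numbers. Then |𝔾(D^{+2})| ≤ n²·|𝔾(D^{+−})| and |𝔾(D^{−2})| ≤ n²·|𝔾(D^{+−})|. -/
/-- `G` has (integer) degree vector `e`. -/
def hasDeg {n : ℕ} (G : SimpleGraph (Fin n)) (e : Fin n → ℤ) : Prop :=
  ∀ k, (degSeq G k : ℤ) = e k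

/-- The number of simple graphs on `Fin n` satisfying the predicate `P`. -/
noncomputable def cardG (n : ℕ) (P : SimpleGraph (Fin n) → Prop) : ℕ :=
  Nat.card {G : SimpleGraph (Fin n) // P G}

open scoped symmDiff

theorem degSeq_eq_ncard {n : ℕ} (G : SimpleGraph (Fin n)) (i : Fin n) :
    degSeq G i = {x | G.Adj i x}.ncard := rfl

theorem toggle_adj {n : ℕ} (G : SimpleGraph (Fin n)) {i j : Fin n} (hij : i ≠ j) (a b : Fin n) :
    (G ∆ SimpleGraph.edge i j).Adj a b ↔
      Xor (G.Adj a b) ((a = i ∧ b = j) ∨ (a = j ∧ b = i)) := by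
  have : (SimpleGraph.edge i j).Adj a b ↔ ((a = i ∧ b = j) ∨ (a = j ∧ b = i)) := by
    rw [SimpleGraph.edge_adj]
    constructor
    · rintro ⟨h, -⟩
      tauto
    · rintro (⟨rfl, rfl⟩ | ⟨rfl, rfl⟩)
      · exact ⟨by tauto, hij⟩
      · exact ⟨by tauto, hij.symm⟩
  rw [symmDiff_def, SimpleGraph.sup_adj, SimpleGraph.sdiff_adj, SimpleGraph.sdiff_adj, this]
  rfl

theorem degSeq_toggle_of_not_adj {n : ℕ} (G : SimpleGraph (Fin n)) {i j : Fin n} (hij : i ≠ j)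
    (h : ¬ G.Adj i j) (k : Fin n) :
    degSeq (G ∆ SimpleGraph.edge i j) k
      = degSeq G k + (if k = i then 1 else 0) + (if k = j then 1 else 0) := by
  have h' : ¬ G.Adj j i := fun hh => h hh.symm
  simp only [degSeq_eq_ncard, toggle_adj G hij]
  by_cases hi : k = i
  · subst hi
    have hs : {x | Xor (G.Adj k x) ((k = k ∧ x = j) ∨ (k = j ∧ x = k))}
        = insert j {x | G.Adj k x} := by
      ext x
      by_cases hx : x = j <;> simp_all [xor_def]
    rw [hs, Set.ncard_insert_of_notMem (by simpa using h)]
    simp [hij]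
  by_cases hj : k = j
  · subst hj
    have hs : {x | Xor (G.Adj k x) ((k = i ∧ x = k) ∨ (k = k ∧ x = i))}
        = insert i {x | G.Adj k x} := by
      ext x
      by_cases hx : x = i <;> simp_all [xor_def]
    rw [hs, Set.ncard_insert_of_notMem (by simpa using h')]
    simp [hi]
  · simp [hi, hj, xor_def]

theorem degSeq_toggle_of_adj {n : ℕ} (G : SimpleGraph (Fin n)) {i j : Fin n} (h : G.Adj i j)
    (k : Fin n) :
    degSeq G k = degSeq (G ∆ SimpleGraph.edge i j) k
      + (if k = i then 1 else 0) + (if k = j then 1 else 0) := by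
  have hn : ¬ (G ∆ SimpleGraph.edge i j).Adj i j := by
    rw [toggle_adj G h.ne]
    simp [h]
  have := degSeq_toggle_of_not_adj _ h.ne hn k
  rwa [symmDiff_symmDiff_cancel_right] at this

theorem degSeq_lt {n : ℕ} (G : SimpleGraph (Fin n)) (i : Fin n) : degSeq G i < n := by
  rw [degSeq_eq_ncard]
  have h := Set.ncard_lt_card (s := {x | G.Adj i x}) (fun hu => by
    have : i ∈ {x | G.Adj i x} := hu ▸ Set.mem_univ i
    exact G.loopless.irrefl i this)
  simpa using h

/-- If every graph satisfying `P` lands in `𝔾(D^{+-})` after toggling a suitable edge, then there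
are at most `|𝔾(D^{+-})|` such graphs: the toggled edge can be read off from the degrees of the
image, so the map is injective. -/
theorem card_le_of_toggle {n : ℕ} (d : Fin n → ℕ) (P : SimpleGraph (Fin n) → Prop)
    (hP : ∀ G, P G → ∃ i j : Fin n, i ≠ j ∧ hasDeg (G ∆ SimpleGraph.edge i j)
      (fun k => (d k : ℤ) + (if k = i then 1 else 0) - (if k = j then 1 else 0))) :
    cardG n P ≤ cardG n (fun G => ∃ i j : Fin n, i ≠ j ∧ hasDeg G
      (fun k => (d k : ℤ) + (if k = i then 1 else 0) - (if k = j then 1 else 0))) := by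
  choose i j hij hdeg using hP
  refine Nat.card_le_card_of_injective
    (fun G => ⟨G.1 ∆ SimpleGraph.edge (i G.1 G.2) (j G.1 G.2), _, _, hij G.1 G.2, hdeg G.1 G.2⟩) ?_
  rintro ⟨G, hG⟩ ⟨G', hG'⟩ h
  have h0 : G ∆ SimpleGraph.edge (i G hG) (j G hG)
      = G' ∆ SimpleGraph.edge (i G' hG') (j G' hG') := congrArg Subtype.val h
  have h1 := hdeg G hG
  have h2 := hdeg G' hG'
  have n1 := hij G hG
  have n2 := hij G' hG'
  rw [h0] at h1
  have e : ∀ k, _ := fun k => (h1 k).symm.trans (h2 k)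
  have ei : i G hG = i G' hG' := by
    have := e (i G hG)
    by_contra hne
    simp only [if_true, if_neg n1, if_neg hne] at this
    split_ifs at this <;> omega
  have ej : j G hG = j G' hG' := by
    have := e (j G hG)
    by_contra hne
    simp only [if_true, if_neg n1.symm, if_neg hne] at this
    split_ifs at this <;> omega
  rw [ei, ej] at h0
  exact Subtype.ext (symmDiff_left_injective _ h0)

/-- The case `n = 0` is vacuous, since `P` forces a vertex to exist; otherwise `1 ≤ n ^ 2`. -/
theorem cardG_le_sq_mul {n m : ℕ} (P : Fin n → SimpleGraph (Fin n) → Prop)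
    (h : cardG n (fun G => ∃ i, P i G) ≤ m) : cardG n (fun G => ∃ i, P i G) ≤ n ^ 2 * m := by
  rcases Nat.eq_zero_or_pos n with rfl | hn
  · have : IsEmpty {G : SimpleGraph (Fin 0) // ∃ i, P i G} := ⟨fun G => G.2.choose.elim0⟩
    simp [cardG]
  · exact h.trans (Nat.le_mul_of_pos_left m (by positivity))

/-- `|𝔾(D^{+2})| ≤ n²·|𝔾(D^{+−})|` and `|𝔾(D^{−2})| ≤ n²·|𝔾(D^{+−})|`. -/
theorem stmt17 (n : ℕ) (d : Fin n → ℕ) (hg : IsGraphic d) :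
    cardG n (fun G => ∃ i : Fin n, hasDeg G
        (fun k => (d k : ℤ) + (if k = i then 2 else 0)))
      ≤ n ^ 2 * cardG n (fun G => ∃ i j : Fin n, i ≠ j ∧ hasDeg G
          (fun k => (d k : ℤ) + (if k = i then 1 else 0) - (if k = j then 1 else 0))) ∧
    cardG n (fun G => ∃ i : Fin n, hasDeg G
        (fun k => (d k : ℤ) - (if k = i then 2 else 0)))
      ≤ n ^ 2 * cardG n (fun G => ∃ i j : Fin n, i ≠ j ∧ hasDeg G
          (fun k => (d k : ℤ) + (if k = i then 1 else 0) - (if k = j then 1 else 0))) := by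
  refine ⟨cardG_le_sq_mul _ (card_le_of_toggle d _ ?_), cardG_le_sq_mul _ (card_le_of_toggle d _ ?_)⟩
  · rintro G ⟨i, hG⟩
    have hpos : degSeq G i ≠ 0 := by
      have := hG i
      simp only [if_true] at this
      omega
    obtain ⟨j, hj⟩ : ∃ j, G.Adj i j := by
      rw [degSeq_eq_ncard] at hpos
      exact Set.nonempty_of_ncard_ne_zero hpos
    refine ⟨i, j, hj.ne, fun k => ?_⟩
    have h1 := degSeq_toggle_of_adj G hj k
    have h2 := hG k
    simp only at h2 ⊢
    split_ifs at h1 h2 ⊢ <;> omega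
  · rintro G ⟨i, hG⟩
    -- `d i ≤ n - 1`, so the neighbours of `i` together with `i` do not exhaust the vertex set.
    have hlt : degSeq G i + 1 < n := by
      obtain ⟨H, hH⟩ := hg
      have h1 := degSeq_lt H i
      have h2 := hH i
      have h3 := hG i
      simp only [if_true] at h3
      omega
    obtain ⟨j, hij, hj⟩ : ∃ j, i ≠ j ∧ ¬ G.Adj i j := by
      by_contra! hall
      have hu : insert i {x | G.Adj i x} = Set.univ := by
        ext x
        have := hall x
        simp only [Set.mem_insert_iff, Set.mem_ofPred_eq, Set.mem_univ, iff_true]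
        tauto
      have hc := Set.ncard_insert_le i {x | G.Adj i x}
      rw [hu, ← degSeq_eq_ncard, Set.ncard_univ, Nat.card_fin] at hc
      omega
    -- The surplus is now at `j` and the deficit at `i`.
    refine ⟨j, i, hij.symm, fun k => ?_⟩
    rw [SimpleGraph.edge_comm]
    have h1 := degSeq_toggle_of_not_adj G hij hj k
    have h2 := hG k
    simp only at h2 ⊢
    split_ifs at h1 h2 ⊢ <;> omega
end

section
/- Let D = (d₁,…,dₙ) be a graphic sequence of natural numbers. Then |𝔾(D^{+−})| ≤ (n⁴ + n²)·|𝔾(D^{++})| and |𝔾(D^{+−})| ≤ (n⁴ + n²)·|𝔾(D^{−−})|. -/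
open SimpleGraph

lemma degSeq_eq_card_s18 {n : ℕ} (G : SimpleGraph (Fin n)) [DecidableRel G.Adj] (k : Fin n) :
    degSeq G k = (Finset.univ.filter (fun l => G.Adj k l)).card := by
  rw [degSeq, Nat.card_eq_fintype_card, Fintype.card_subtype]

lemma degSeq_add_compl {n : ℕ} (G : SimpleGraph (Fin n)) (k : Fin n) :
    degSeq G k + degSeq Gᶜ k + 1 = n := by
  classical
  rw [degSeq_eq_card_s18, degSeq_eq_card_s18]
  have h : (Finset.univ.filter (fun l => Gᶜ.Adj k l))
      = (Finset.univ.filter (fun l => ¬ G.Adj k l)).erase k := by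
    ext l
    simp [compl_adj, eq_comm]
  rw [h, Finset.card_erase_of_mem (by simp)]
  have h1 := Finset.card_filter_add_card_filter_not (s := (Finset.univ : Finset (Fin n)))
    (fun l => G.Adj k l)
  have h2 : 0 < (Finset.univ.filter (fun l => ¬ G.Adj k l)).card :=
    Finset.card_pos.2 ⟨k, by simp⟩
  simp only [Finset.card_univ, Fintype.card_fin] at h1
  omega

lemma degSeq_full_iff {n : ℕ} (G : SimpleGraph (Fin n)) (k : Fin n) :
    degSeq G k + 1 = n ↔ ∀ b, b ≠ k → G.Adj k b := by
  classical
  have h := degSeq_add_compl G k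
  have h2 : degSeq Gᶜ k = 0 ↔ ∀ b, b ≠ k → G.Adj k b := by
    rw [degSeq_eq_card_s18, Finset.card_eq_zero, Finset.filter_eq_empty_iff]
    simp only [Finset.mem_univ, true_imp_iff, compl_adj, not_and, not_not]
    exact ⟨fun h b hb => h hb.symm, fun h b hb => h b hb.symm⟩
  rw [← h2]
  omega

lemma degSeq_mono_nbhd {n : ℕ} {G H : SimpleGraph (Fin n)} {k : Fin n}
    (h : ∀ l, G.Adj k l → H.Adj k l) : degSeq G k ≤ degSeq H k := by
  classical
  rw [degSeq_eq_card_s18, degSeq_eq_card_s18]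
  exact Finset.card_le_card fun l => by simpa using h l

lemma degSeq_sup_edge {n : ℕ} (G : SimpleGraph (Fin n)) {u v : Fin n} (huv : u ≠ v)
    (h : ¬ G.Adj u v) (k : Fin n) :
    (degSeq (G ⊔ edge u v) k : ℤ)
      = degSeq G k + (if k = u then 1 else 0) + (if k = v then 1 else 0) := by
  classical
  rw [degSeq_eq_card_s18, degSeq_eq_card_s18]
  by_cases hu : k = u
  · subst hu
    have : (Finset.univ.filter (fun l => (G ⊔ edge k v).Adj k l))
        = insert v (Finset.univ.filter (fun l => G.Adj k l)) := by
      ext l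
      simp only [sup_adj, edge_adj, Finset.mem_filter, Finset.mem_univ, true_and,
        Finset.mem_insert]
      grind
    rw [this, Finset.card_insert_of_notMem (by simpa using h)]
    simp [huv]
  by_cases hv : k = v
  · subst hv
    have : (Finset.univ.filter (fun l => (G ⊔ edge u k).Adj k l))
        = insert u (Finset.univ.filter (fun l => G.Adj k l)) := by
      ext l
      simp only [sup_adj, edge_adj, Finset.mem_filter, Finset.mem_univ, true_and,
        Finset.mem_insert]
      grind
    rw [this, Finset.card_insert_of_notMem (by simpa [G.adj_comm] using h)]
    simp [hu]
  · simp [hu, hv, sup_adj, edge_adj]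

lemma edge_le_of_adj {n : ℕ} {G : SimpleGraph (Fin n)} {u v : Fin n} (h : G.Adj u v) :
    edge u v ≤ G := by
  intro a b hab
  rw [edge_adj] at hab
  rcases hab with ⟨⟨rfl, rfl⟩ | ⟨rfl, rfl⟩, _⟩
  · exact h
  · exact h.symm

lemma sdiff_edge_sup {n : ℕ} {G : SimpleGraph (Fin n)} {u v : Fin n} (h : G.Adj u v) :
    G \ edge u v ⊔ edge u v = G :=
  sdiff_sup_cancel (edge_le_of_adj h)

lemma sup_edge_sdiff {n : ℕ} {G : SimpleGraph (Fin n)} {u v : Fin n} (h : ¬ G.Adj u v) :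
    (G ⊔ edge u v) \ edge u v = G := by
  rw [sup_sdiff_right_self, sdiff_eq_left, disjoint_left]
  intro a b hab he
  rw [edge_adj] at he
  rcases he with ⟨⟨rfl, rfl⟩ | ⟨rfl, rfl⟩, _⟩
  · exact h hab
  · exact h hab.symm

lemma degSeq_sdiff_edge {n : ℕ} (G : SimpleGraph (Fin n)) {u v : Fin n}
    (h : G.Adj u v) (k : Fin n) :
    (degSeq (G \ edge u v) k : ℤ)
      = degSeq G k - (if k = u then 1 else 0) - (if k = v then 1 else 0) := by
  have h1 := degSeq_sup_edge (G \ edge u v) h.ne (by simp [edge_adj, h.ne]) k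
  rw [sdiff_edge_sup h] at h1
  linarith

/-- The inverse moves: from `(j, x)`, delete the edge `jx`; from `(i, j, x, b)`, replace `bx` by
`ix` and then delete `ij`. -/
def undo {n : ℕ} :
    (Fin n × Fin n × Fin n × Fin n) ⊕ (Fin n × Fin n) → SimpleGraph (Fin n) → SimpleGraph (Fin n)
  | .inl (i, j, x, b), H => (H \ edge b x ⊔ edge i x) \ edge i j
  | .inr (j, x), H => H \ edge j x

/-- Every `+-` graph arises from a `++` graph by an inverse move. -/
lemma exists_undo {n : ℕ} {d : Fin n → ℕ} (hg : IsGraphic d) {G : SimpleGraph (Fin n)}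
    {i j : Fin n} (hij : i ≠ j)
    (hG : hasDeg G (fun k => (d k : ℤ) + (if k = i then 1 else 0) - (if k = j then 1 else 0))) :
    ∃ t, ∃ H : SimpleGraph (Fin n), (∃ a b : Fin n, a ≠ b ∧ hasDeg H
      (fun k => (d k : ℤ) + (if k = a then 1 else 0) + (if k = b then 1 else 0))) ∧
      undo t H = G := by
  obtain ⟨R, hR⟩ := hg
  by_cases h1 : ∃ x, x ≠ i ∧ x ≠ j ∧ ¬ G.Adj j x
  · obtain ⟨x, hxi, hxj, hjx⟩ := h1
    refine ⟨.inr (j, x), G ⊔ edge j x, ⟨i, x, hxi.symm, fun k => ?_⟩, sup_edge_sdiff hjx⟩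
    rw [degSeq_sup_edge G hxj.symm hjx, hG k]
    ring
  push Not at h1
  have hnij : ¬ G.Adj i j := by
    intro hadj
    have hfull : degSeq G j + 1 = n := by
      rw [degSeq_full_iff]
      intro b hb
      by_cases hbi : b = i
      · exact hbi ▸ hadj.symm
      · exact h1 b hbi hb
    have h2 := hG j
    have h3 := degSeq_add_compl R j
    have h4 := hR j
    simp only [if_neg hij.symm, if_true] at h2
    omega
  have hdeg1 : ∀ k, (degSeq (G ⊔ edge i j) k : ℤ) = d k + 2 * (if k = i then 1 else 0) := by
    intro k
    rw [degSeq_sup_edge G hij hnij, hG k]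
    ring
  by_cases h2 : ∃ x b, (G ⊔ edge i j).Adj i x ∧ b ≠ x ∧ ¬ (G ⊔ edge i j).Adj b x
  · obtain ⟨x, b, hix, hbx, hnbx⟩ := h2
    have hib : i ≠ b := by
      rintro rfl
      exact hnbx hix
    have hnbx' : ¬ ((G ⊔ edge i j) \ edge i x).Adj b x := fun h => hnbx h.1
    refine ⟨.inl (i, j, x, b), (G ⊔ edge i j) \ edge i x ⊔ edge b x,
      ⟨i, b, hib, fun k => ?_⟩, ?_⟩
    · rw [degSeq_sup_edge _ hbx hnbx', degSeq_sdiff_edge _ hix, hdeg1]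
      ring
    · simp only [undo]
      rw [sup_edge_sdiff hnbx', sdiff_edge_sup hix, sup_edge_sdiff hnij]
  -- All neighbours of `i` in `G + ij` are now dominating, hence adjacent to `i` in `R`.
  exfalso
  push Not at h2
  have hle : degSeq (G ⊔ edge i j) i ≤ degSeq R i := by
    refine degSeq_mono_nbhd fun x hix => ?_
    have hfull : degSeq (G ⊔ edge i j) x + 1 = n :=
      (degSeq_full_iff _ x).2 fun b hb => (h2 x b hix hb).symm
    have h3 := hdeg1 x
    simp only [if_neg hix.ne.symm] at h3
    have h4 := hR x
    exact ((degSeq_full_iff R x).1 (by omega) i hix.ne).symm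
  have h3 := hdeg1 i
  have h4 := hR i
  simp only [if_true] at h3
  omega

lemma card_plus_minus_le {n : ℕ} {d : Fin n → ℕ} (hg : IsGraphic d) :
    cardG n (fun G => ∃ i j : Fin n, i ≠ j ∧ hasDeg G
        (fun k => (d k : ℤ) + (if k = i then 1 else 0) - (if k = j then 1 else 0)))
      ≤ (n ^ 4 + n ^ 2) * cardG n (fun G => ∃ i j : Fin n, i ≠ j ∧ hasDeg G
          (fun k => (d k : ℤ) + (if k = i then 1 else 0) + (if k = j then 1 else 0))) := by
  classical
  have hT : Nat.card ((Fin n × Fin n × Fin n × Fin n) ⊕ (Fin n × Fin n)) = n ^ 4 + n ^ 2 := by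
    simp
    ring
  unfold cardG
  rw [← hT, ← Nat.card_prod]
  have hex : ∀ G : {G : SimpleGraph (Fin n) // ∃ i j : Fin n, i ≠ j ∧ hasDeg G
        (fun k => (d k : ℤ) + (if k = i then 1 else 0) - (if k = j then 1 else 0))},
      ∃ p : ((Fin n × Fin n × Fin n × Fin n) ⊕ (Fin n × Fin n)) ×
        {G : SimpleGraph (Fin n) // ∃ i j : Fin n, i ≠ j ∧ hasDeg G
          (fun k => (d k : ℤ) + (if k = i then 1 else 0) + (if k = j then 1 else 0))},
        undo p.1 p.2.1 = G.1 := by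
    rintro ⟨G, i, j, hij, hG⟩
    obtain ⟨t, H, hH, h⟩ := exists_undo hg hij hG
    exact ⟨(t, ⟨H, hH⟩), h⟩
  choose f hf using hex
  refine Nat.card_le_card_of_injective f fun G G' h => Subtype.ext ?_
  rw [← hf G, ← hf G', h]

lemma cardG_compl {n : ℕ} {P Q : SimpleGraph (Fin n) → Prop} (h : ∀ G, P G ↔ Q Gᶜ) :
    cardG n P = cardG n Q :=
  Nat.card_congr ((Equiv.mk compl compl compl_compl compl_compl).subtypeEquiv h)

/-- `|𝔾(D^{+−})| ≤ (n⁴ + n²)·|𝔾(D^{++})|` and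
`|𝔾(D^{+−})| ≤ (n⁴ + n²)·|𝔾(D^{−−})|`. -/
theorem stmt18 (n : ℕ) (d : Fin n → ℕ) (hg : IsGraphic d) :
    cardG n (fun G => ∃ i j : Fin n, i ≠ j ∧ hasDeg G
        (fun k => (d k : ℤ) + (if k = i then 1 else 0) - (if k = j then 1 else 0)))
      ≤ (n ^ 4 + n ^ 2) * cardG n (fun G => ∃ i j : Fin n, i ≠ j ∧ hasDeg G
          (fun k => (d k : ℤ) + (if k = i then 1 else 0) + (if k = j then 1 else 0))) ∧
    cardG n (fun G => ∃ i j : Fin n, i ≠ j ∧ hasDeg G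
        (fun k => (d k : ℤ) + (if k = i then 1 else 0) - (if k = j then 1 else 0)))
      ≤ (n ^ 4 + n ^ 2) * cardG n (fun G => ∃ i j : Fin n, i ≠ j ∧ hasDeg G
          (fun k => (d k : ℤ) - (if k = i then 1 else 0) - (if k = j then 1 else 0))) := by
  refine ⟨card_plus_minus_le hg, ?_⟩
  obtain ⟨R, hR⟩ := hg
  have hd : ∀ k, (degSeq Rᶜ k : ℤ) = n - 1 - d k := by
    intro k
    have h1 := degSeq_add_compl R k
    have h2 := hR k
    omega
  have hc : ∀ (G : SimpleGraph (Fin n)) k, (degSeq Gᶜ k : ℤ) = n - 1 - degSeq G k := by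
    intro G k
    have h1 := degSeq_add_compl G k
    omega
  have key := card_plus_minus_le (d := degSeq Rᶜ) ⟨Rᶜ, fun _ => rfl⟩
  convert key using 1
  · refine cardG_compl fun G => ?_
    -- Complementation exchanges the roles of the raised and the lowered vertex.
    rw [exists_comm]
    refine exists₂_congr fun i j => and_congr ne_comm (forall_congr' fun k => ?_)
    simp only [hd, hc]
    constructor <;> intro h <;> linarith
  · congr 1
    refine cardG_compl fun G => ?_
    refine exists₂_congr fun i j => and_congr_right fun _ => forall_congr' fun k => ?_
    simp only [hd, hc]
    constructor <;> intro h <;> linarith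
end
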